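/- arXiv:2509.16299 — 11 statements merged into one kernel-verified Lean document; each statement's English description precedes it below -/
import Mathlib

section
/- Let U₁, U₂ : [0,1]² → [0,1] be disjunctive uninorms with the same neutral element e ∈ (0,1), and let N₁, N₂ : [0,1] → [0,1] be continuous fuzzy negations such that U₁(N₁(x), y) = U₂(N₂(x), y) for all x, y ∈ [0,1]. Then N₁ = N₂ and U₁ = U₂. -/
/-- A uninorm on `[0,1]` with neutral element `e`: commutative, associative,
increasing in each variable, `U x e = x`, mapping `[0,1]²` into `[0,1]`. -/
def IsUninorm (U : ℝ → ℝ → ℝ) (e : ℝ) : Prop :=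
  e ∈ Set.Icc (0:ℝ) 1 ∧
  (∀ x ∈ Set.Icc (0:ℝ) 1, ∀ y ∈ Set.Icc (0:ℝ) 1, U x y ∈ Set.Icc (0:ℝ) 1) ∧
  (∀ x ∈ Set.Icc (0:ℝ) 1, ∀ y ∈ Set.Icc (0:ℝ) 1, U x y = U y x) ∧
  (∀ x ∈ Set.Icc (0:ℝ) 1, ∀ y ∈ Set.Icc (0:ℝ) 1, ∀ z ∈ Set.Icc (0:ℝ) 1,
    U (U x y) z = U x (U y z)) ∧
  (∀ x ∈ Set.Icc (0:ℝ) 1, ∀ y ∈ Set.Icc (0:ℝ) 1, ∀ z ∈ Set.Icc (0:ℝ) 1,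
    y ≤ z → U x y ≤ U x z) ∧
  (∀ x ∈ Set.Icc (0:ℝ) 1, ∀ y ∈ Set.Icc (0:ℝ) 1, ∀ z ∈ Set.Icc (0:ℝ) 1,
    x ≤ y → U x z ≤ U y z) ∧
  (∀ x ∈ Set.Icc (0:ℝ) 1, U x e = x)

/-- A fuzzy negation on `[0,1]`: `N 0 = 1`, `N 1 = 0`, decreasing,
mapping `[0,1]` into `[0,1]`. -/
def IsFuzzyNegation (N : ℝ → ℝ) : Prop :=
  (∀ x ∈ Set.Icc (0:ℝ) 1, N x ∈ Set.Icc (0:ℝ) 1) ∧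
  N 0 = 1 ∧ N 1 = 0 ∧
  (∀ x ∈ Set.Icc (0:ℝ) 1, ∀ y ∈ Set.Icc (0:ℝ) 1, x ≤ y → N y ≤ N x)

namespace IsUninorm

variable {U : ℝ → ℝ → ℝ} {e : ℝ}

theorem neutral_mem_Icc (hU : IsUninorm U e) : e ∈ Set.Icc (0 : ℝ) 1 :=
  hU.1

theorem apply_neutral (hU : IsUninorm U e) : ∀ x ∈ Set.Icc (0 : ℝ) 1, U x e = x := by
  obtain ⟨-, -, -, -, -, -, h⟩ := hU
  exact h

end IsUninorm

namespace IsFuzzyNegation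

variable {N : ℝ → ℝ}

theorem mapsTo_Icc (hN : IsFuzzyNegation N) : Set.MapsTo N (Set.Icc 0 1) (Set.Icc 0 1) :=
  hN.1

theorem surjOn_Icc (hN : IsFuzzyNegation N) (hNc : ContinuousOn N (Set.Icc 0 1)) :
    Set.SurjOn N (Set.Icc 0 1) (Set.Icc 0 1) := by
  obtain ⟨-, map_zero, map_one, -⟩ := hN
  simpa only [Set.SurjOn, map_zero, map_one] using intermediate_value_Icc' zero_le_one hNc

end IsFuzzyNegation

theorem stmt2_general {α β γ : Type*} {s : Set α} {t : Set β} {u : Set γ}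
    {U₁ U₂ : β → γ → β} {e : γ} {N₁ N₂ : α → β} (he : e ∈ u)
    (hU₁ : ∀ x ∈ t, U₁ x e = x) (hU₂ : ∀ x ∈ t, U₂ x e = x)
    (hN₁ : Set.MapsTo N₁ s t) (hN₂ : Set.MapsTo N₂ s t) (hN₁s : Set.SurjOn N₁ s t)
    (heq : ∀ x ∈ s, ∀ y ∈ u, U₁ (N₁ x) y = U₂ (N₂ x) y) :
    (∀ x ∈ s, N₁ x = N₂ x) ∧ (∀ x ∈ t, ∀ y ∈ u, U₁ x y = U₂ x y) := by
  have hN : ∀ x ∈ s, N₁ x = N₂ x := fun x hx ↦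
    calc
      N₁ x = U₁ (N₁ x) e := (hU₁ _ (hN₁ hx)).symm
      _ = U₂ (N₂ x) e := heq x hx e he
      _ = N₂ x := hU₂ _ (hN₂ hx)
  refine ⟨hN, fun x hx y hy ↦ ?_⟩
  obtain ⟨a, ha, rfl⟩ := hN₁s hx
  calc
    U₁ (N₁ a) y = U₂ (N₂ a) y := heq a ha y hy
    _ = U₂ (N₁ a) y := by rw [hN a ha]

theorem stmt2 (U₁ U₂ : ℝ → ℝ → ℝ) (e : ℝ) (he : e ∈ Set.Ioo (0:ℝ) 1)
    (hU₁ : IsUninorm U₁ e) (hU₂ : IsUninorm U₂ e)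
    (hd₁ : U₁ 1 0 = 1) (hd₂ : U₂ 1 0 = 1)
    (N₁ N₂ : ℝ → ℝ) (hN₁ : IsFuzzyNegation N₁) (hN₂ : IsFuzzyNegation N₂)
    (hN₁c : ContinuousOn N₁ (Set.Icc 0 1)) (hN₂c : ContinuousOn N₂ (Set.Icc 0 1))
    (heq : ∀ x ∈ Set.Icc (0:ℝ) 1, ∀ y ∈ Set.Icc (0:ℝ) 1, U₁ (N₁ x) y = U₂ (N₂ x) y) :
    (∀ x ∈ Set.Icc (0:ℝ) 1, N₁ x = N₂ x) ∧
    (∀ x ∈ Set.Icc (0:ℝ) 1, ∀ y ∈ Set.Icc (0:ℝ) 1, U₁ x y = U₂ x y) :=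
  stmt2_general hU₁.neutral_mem_Icc hU₁.apply_neutral hU₂.apply_neutral hN₁.mapsTo_Icc
    hN₂.mapsTo_Icc (hN₁.surjOn_Icc hN₁c) heq
end

section
/- The function U₂ : [0,1]² → [0,1] defined by U₂(x,y) = 3xy / (3xy + (1−x)(1−y)) for (x,y) ∈ [0,1]² \ {(0,1),(1,0)} and U₂(0,1) = U₂(1,0) = 1 is a disjunctive uninorm with neutral element 1/4, i.e., it is commutative, associative, increasing in each variable, satisfies U₂(x, 1/4) = x for all x ∈ [0,1], and U₂(1,0) = 1. -/
open Classical in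
/-- The uninorm `U₂` of Example 1. -/
noncomputable def Uex2 : ℝ → ℝ → ℝ := fun x y =>
  if (x = 0 ∧ y = 1) ∨ (x = 1 ∧ y = 0) then 1
  else 3*x*y / (3*x*y + (1-x)*(1-y))

/-!
The odds against `x`, normalised to be `1` at `e`, turn the cross-ratio operation into
multiplication on `[0, ∞]`. They decrease strictly from `∞` at `0` to `0` at `1`, so all laws of a
uninorm are pulled back from the ordered commutative monoid `[0, ∞]`. Working with the odds against
`x` rather than for `x` makes the convention `0 * ∞ = 0` agree with the disjunctive corner values
`U 0 1 = U 1 0 = 1`. The case `e = 1/4` is `U₂`.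
-/

open Set
open scoped ENNReal

theorem isUninorm_of_strictAntiOn {M : Type*} [CommMonoid M] [Preorder M] [MulLeftMono M]
    {U : ℝ → ℝ → ℝ} {e : ℝ} {g : ℝ → M} (hg : StrictAntiOn g (Icc 0 1)) (he : e ∈ Icc (0 : ℝ) 1)
    (hU : ∀ x ∈ Icc (0 : ℝ) 1, ∀ y ∈ Icc (0 : ℝ) 1, U x y ∈ Icc (0 : ℝ) 1)
    (hge : g e = 1)
    (hgU : ∀ x ∈ Icc (0 : ℝ) 1, ∀ y ∈ Icc (0 : ℝ) 1, g (U x y) = g x * g y) :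
    IsUninorm U e := by
  have comm : ∀ x ∈ Icc (0 : ℝ) 1, ∀ y ∈ Icc (0 : ℝ) 1, U x y = U y x := fun x hx y hy ↦
    hg.injOn (hU x hx y hy) (hU y hy x hx) <| by rw [hgU x hx y hy, hgU y hy x hx, mul_comm]
  have mono_right : ∀ x ∈ Icc (0 : ℝ) 1, ∀ y ∈ Icc (0 : ℝ) 1, ∀ z ∈ Icc (0 : ℝ) 1,
      y ≤ z → U x y ≤ U x z := by
    intro x hx y hy z hz hyz
    rw [← hg.le_iff_ge (hU x hx z hz) (hU x hx y hy), hgU x hx z hz, hgU x hx y hy]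
    exact mul_le_mul_right (hg.antitoneOn hy hz hyz) (g x)
  refine ⟨he, hU, comm, fun x hx y hy z hz ↦ ?assoc, mono_right,
    fun x hx y hy z hz hxy ↦ ?mono_left, fun x hx ↦ ?neutral⟩
  case assoc =>
    have hxy := hU x hx y hy
    have hyz := hU y hy z hz
    refine hg.injOn (hU _ hxy z hz) (hU x hx _ hyz) ?_
    rw [hgU _ hxy z hz, hgU x hx y hy, hgU x hx _ hyz, hgU y hy z hz, mul_assoc]
  case mono_left =>
    rw [comm x hx z hz, comm y hy z hz]
    exact mono_right z hz x hx y hy hxy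
  case neutral =>
    exact hg.injOn (hU x hx e he) hx <| by rw [hgU x hx e he, hge, mul_one]

/-- The odds against `x`, as an element of `[0, ∞]`, normalised so that the odds against `e` are
`1`; this is the multiplicative generator of `crossRatio e`. Division is that of `ℝ≥0∞`, so the
value at `x = 0` is `∞` for `0 < e`. -/
noncomputable def oddsAgainst (e x : ℝ) : ℝ≥0∞ :=
  ENNReal.ofReal (e * (1 - x)) / ENNReal.ofReal ((1 - e) * x)

open Classical in
/-- The disjunctive cross-ratio operation with parameter `e`, which turns out to be its neutral
element. The quotient would be `0 / 0` at the corners `(0, 1)` and `(1, 0)`, where the value is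
set to `1`. -/
noncomputable def crossRatio (e x y : ℝ) : ℝ :=
  if (x = 0 ∧ y = 1) ∨ (x = 1 ∧ y = 0) then 1
  else (1 - e) * x * y / ((1 - e) * x * y + e * (1 - x) * (1 - y))

theorem oddsAgainst_one (e : ℝ) : oddsAgainst e 1 = 0 := by
  simp [oddsAgainst]

section

variable {e : ℝ}

theorem oddsAgainst_self (he : e ∈ Ioo (0 : ℝ) 1) : oddsAgainst e e = 1 := by
  have hpos : 0 < e * (1 - e) := mul_pos he.1 (sub_pos.2 he.2)
  rw [oddsAgainst, mul_comm (1 - e)]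
  exact ENNReal.div_self (ENNReal.ofReal_pos.2 hpos).ne' ENNReal.ofReal_ne_top

theorem strictAntiOn_oddsAgainst (he : e ∈ Ioo (0 : ℝ) 1) :
    StrictAntiOn (oddsAgainst e) (Icc 0 1) := by
  intro x hx y hy hxy
  have he' : 0 < 1 - e := sub_pos.2 he.2
  have hden_pos : 0 < (1 - e) * y := mul_pos he' (hx.1.trans_lt hxy)
  have hnum_pos : 0 < e * (1 - x) := mul_pos he.1 (sub_pos.2 (hxy.trans_le hy.2))
  have hnum : e * (1 - y) < e * (1 - x) := mul_lt_mul_of_pos_left (by linarith) he.1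
  have hden : (1 - e) * x ≤ (1 - e) * y := mul_le_mul_of_nonneg_left hxy.le he'.le
  calc
    oddsAgainst e y < ENNReal.ofReal (e * (1 - x)) / ENNReal.ofReal ((1 - e) * y) :=
      ENNReal.div_lt_div_right (ENNReal.ofReal_pos.2 hden_pos).ne' ENNReal.ofReal_ne_top
        ((ENNReal.ofReal_lt_ofReal_iff hnum_pos).2 hnum)
    _ ≤ oddsAgainst e x := ENNReal.div_le_div_left (ENNReal.ofReal_le_ofReal hden) _

variable {x y : ℝ}

theorem crossRatio_denom_pos (he : e ∈ Ioo (0 : ℝ) 1) (hx : x ∈ Icc (0 : ℝ) 1)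
    (hy : y ∈ Icc (0 : ℝ) 1) (hxy : ¬((x = 0 ∧ y = 1) ∨ (x = 1 ∧ y = 0))) :
    0 < (1 - e) * x * y + e * (1 - x) * (1 - y) := by
  rcases hx.1.eq_or_lt with rfl | hx_pos
  · have hy_lt : y < 1 := hy.2.lt_of_ne fun h ↦ hxy (.inl ⟨rfl, h⟩)
    simpa using mul_pos he.1 (sub_pos.2 hy_lt)
  rcases hy.1.eq_or_lt with rfl | hy_pos
  · have hx_lt : x < 1 := hx.2.lt_of_ne fun h ↦ hxy (.inr ⟨h, rfl⟩)
    simpa using mul_pos he.1 (sub_pos.2 hx_lt)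
  · have hQ : 0 ≤ e * (1 - x) * (1 - y) :=
      mul_nonneg (mul_nonneg he.1.le (sub_nonneg.2 hx.2)) (sub_nonneg.2 hy.2)
    exact add_pos_of_pos_of_nonneg (mul_pos (mul_pos (sub_pos.2 he.2) hx_pos) hy_pos) hQ

theorem crossRatio_mem_Icc (he : e ∈ Icc (0 : ℝ) 1) (hx : x ∈ Icc (0 : ℝ) 1)
    (hy : y ∈ Icc (0 : ℝ) 1) : crossRatio e x y ∈ Icc (0 : ℝ) 1 := by
  unfold crossRatio
  split_ifs
  · exact right_mem_Icc.2 zero_le_one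
  · have hP : 0 ≤ (1 - e) * x * y :=
      mul_nonneg (mul_nonneg (sub_nonneg.2 he.2) hx.1) hy.1
    have hQ : 0 ≤ e * (1 - x) * (1 - y) :=
      mul_nonneg (mul_nonneg he.1 (sub_nonneg.2 hx.2)) (sub_nonneg.2 hy.2)
    exact ⟨div_nonneg hP (add_nonneg hP hQ),
      div_le_one_of_le₀ (le_add_of_nonneg_right hQ) (add_nonneg hP hQ)⟩

theorem oddsAgainst_mul_oddsAgainst (he : e ∈ Icc (0 : ℝ) 1) (hx : x ∈ Icc (0 : ℝ) 1) (y : ℝ) :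
    oddsAgainst e x * oddsAgainst e y =
      ENNReal.ofReal (e * (1 - x) * (e * (1 - y))) /
        ENNReal.ofReal ((1 - e) * x * ((1 - e) * y)) := by
  rw [ENNReal.ofReal_mul (mul_nonneg he.1 (sub_nonneg.2 hx.2)),
    ENNReal.ofReal_mul (mul_nonneg (sub_nonneg.2 he.2) hx.1), oddsAgainst, oddsAgainst,
    ENNReal.mul_div_mul_comm (.inr ENNReal.ofReal_ne_top) (.inl ENNReal.ofReal_ne_top)]

theorem oddsAgainst_crossRatio (he : e ∈ Ioo (0 : ℝ) 1) (hx : x ∈ Icc (0 : ℝ) 1)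
    (hy : y ∈ Icc (0 : ℝ) 1) :
    oddsAgainst e (crossRatio e x y) = oddsAgainst e x * oddsAgainst e y := by
  by_cases hxy : (x = 0 ∧ y = 1) ∨ (x = 1 ∧ y = 0)
  · rw [crossRatio, if_pos hxy]
    rcases hxy with ⟨-, rfl⟩ | ⟨rfl, -⟩ <;> simp only [oddsAgainst_one, mul_zero, zero_mul]
  · set D := (1 - e) * x * y + e * (1 - x) * (1 - y) with hD_def
    have hD : 0 < D := crossRatio_denom_pos he hx hy hxy
    have hU : crossRatio e x y = (1 - e) * x * y / D := if_neg hxy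
    have hnum : D * (e * (1 - crossRatio e x y)) = e * (1 - x) * (e * (1 - y)) := by
      rw [hU]
      field_simp
      linear_combination e * hD_def
    have hden : D * ((1 - e) * crossRatio e x y) = (1 - e) * x * ((1 - e) * y) := by
      rw [hU]
      field_simp
    rw [oddsAgainst_mul_oddsAgainst (Ioo_subset_Icc_self he) hx, ← hnum, ← hden,
      ENNReal.ofReal_mul hD.le, ENNReal.ofReal_mul hD.le,
      ENNReal.mul_div_mul_left _ _ (ENNReal.ofReal_pos.2 hD).ne' ENNReal.ofReal_ne_top,
      oddsAgainst]

end

theorem stmt3_general {e : ℝ} (he : e ∈ Ioo (0 : ℝ) 1) :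
    IsUninorm (crossRatio e) e ∧ crossRatio e 1 0 = 1 := by
  have he' : e ∈ Icc (0 : ℝ) 1 := Ioo_subset_Icc_self he
  refine ⟨isUninorm_of_strictAntiOn (strictAntiOn_oddsAgainst he) he' ?_ (oddsAgainst_self he) ?_,
    if_pos (.inr ⟨rfl, rfl⟩)⟩
  · exact fun x hx y hy ↦ crossRatio_mem_Icc he' hx hy
  · exact fun x hx y hy ↦ oddsAgainst_crossRatio he hx hy

theorem crossRatio_one_fourth : crossRatio (1 / 4) = Uex2 := by
  ext x y
  have hcancel : (1 - 1 / 4) * x * y / ((1 - 1 / 4) * x * y + 1 / 4 * (1 - x) * (1 - y)) =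
      3 * x * y / (3 * x * y + (1 - x) * (1 - y)) := by
    rw [← mul_div_mul_left (3 * x * y) _ (by norm_num : (1 / 4 : ℝ) ≠ 0)]
    ring_nf
  rw [crossRatio, Uex2, hcancel]

theorem stmt3 : IsUninorm Uex2 (1/4) ∧ Uex2 1 0 = 1 := by
  rw [← crossRatio_one_fourth]
  exact stmt3_general ⟨by norm_num, by norm_num⟩
end

section
/- Define N₁, N₂ : [0,1] → [0,1] by N₁(x) = 1 − x and N₂(x) = (1−x)/(1+2x), and define U₁, U₂ : [0,1]² → [0,1] by U₁(x,y) = xy/(xy + (1−x)(1−y)) and U₂(x,y) = 3xy/(3xy + (1−x)(1−y)) for (x,y) ∈ [0,1]² \ {(0,1),(1,0)}, with U₁(0,1) = U₁(1,0) = U₂(0,1) = U₂(1,0) = 1. Then U₁(N₁(x), y) = U₂(N₂(x), y) for all x, y ∈ [0,1]; moreover, for (x,y) ∈ [0,1]² \ {(0,0),(1,1)} the common value equals (1−x)y / ((1−x)y + x(1−y)), and at (x,y) = (0,0) and (x,y) = (1,1) the common value equals 1. -/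
/-- The negation `N₁` of Example 1. -/
noncomputable def Nex1 : ℝ → ℝ := fun x => 1 - x

/-- The negation `N₂` of Example 1. -/
noncomputable def Nex2 : ℝ → ℝ := fun x => (1 - x) / (1 + 2*x)

open Classical in
/-- The uninorm `U₁` of Example 1. -/
noncomputable def Uex1 : ℝ → ℝ → ℝ := fun x y =>
  if (x = 0 ∧ y = 1) ∨ (x = 1 ∧ y = 0) then 1
  else x*y / (x*y + (1-x)*(1-y))

/-!
In terms of the odds `o t = t / (1 - t)`, the uninorm
`U_c (x, y) = c x y / (c x y + (1 - x)(1 - y))` satisfies `o (U_c (x, y)) = c * o x * o y`, and the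
negation `N_c x = (1 - x) / (1 + (c - 1) x)` satisfies `o (N_c x) = (c * o x)⁻¹`. Hence
`o (U_c (N_c x, y)) = o y / o x` does not depend on `c`. The two pairs in question are `c = 1` and
`c = 3`.
-/

section Field

variable {K : Type*} [Field K]

/-- The Sugeno negation with parameter `c - 1`. Shifting the parameter by one makes it the negation
that matches `oddsUninorm c`. -/
def sugenoNeg (c x : K) : K := (1 - x) / (1 + (c - 1) * x)

/-- The disjunctive representable uninorm that multiplies odds `t / (1 - t)` up to the factor `c`;
for `0 < c` its neutral element on the unit interval is `1 / (1 + c)`. The expression is `0 / 0` at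
`(0, 1)` and `(1, 0)`, where the value `1` is prescribed. -/
def oddsUninorm [DecidableEq K] (c x y : K) : K :=
  if (x = 0 ∧ y = 1) ∨ (x = 1 ∧ y = 0) then 1
  else c * x * y / (c * x * y + (1 - x) * (1 - y))

variable {c x y : K}

theorem one_sub_sugenoNeg (hx : 1 + (c - 1) * x ≠ 0) :
    1 - sugenoNeg c x = c * x / (1 + (c - 1) * x) := by
  rw [sugenoNeg, one_sub_div hx]
  ring

variable [DecidableEq K]

theorem oddsUninorm_of_ne_zero (h : c * x * y + (1 - x) * (1 - y) ≠ 0) :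
    oddsUninorm c x y = c * x * y / (c * x * y + (1 - x) * (1 - y)) := by
  refine if_neg ?_
  rintro (⟨rfl, rfl⟩ | ⟨rfl, rfl⟩) <;> simp at h

theorem oddsUninorm_sugenoNeg (hc : c ≠ 0) (hx : 1 + (c - 1) * x ≠ 0)
    (hxy : (1 - x) * y + x * (1 - y) ≠ 0) :
    oddsUninorm c (sugenoNeg c x) y = (1 - x) * y / ((1 - x) * y + x * (1 - y)) := by
  set k := c / (1 + (c - 1) * x) with hk
  have k_ne_zero : k ≠ 0 := div_ne_zero hc hx
  have num_eq : c * sugenoNeg c x * y = k * ((1 - x) * y) := by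
    rw [sugenoNeg, hk]
    ring
  have compl_eq : (1 - sugenoNeg c x) * (1 - y) = k * (x * (1 - y)) := by
    rw [one_sub_sugenoNeg hx, hk]
    ring
  have denom_eq : c * sugenoNeg c x * y + (1 - sugenoNeg c x) * (1 - y) =
      k * ((1 - x) * y + x * (1 - y)) := by
    rw [num_eq, compl_eq, mul_add]
  have denom_ne_zero : c * sugenoNeg c x * y + (1 - sugenoNeg c x) * (1 - y) ≠ 0 :=
    denom_eq ▸ mul_ne_zero k_ne_zero hxy
  rw [oddsUninorm_of_ne_zero denom_ne_zero, denom_eq, num_eq, mul_div_mul_left _ _ k_ne_zero]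

theorem oddsUninorm_sugenoNeg_zero_zero (c : K) : oddsUninorm c (sugenoNeg c 0) 0 = 1 := by
  simp [oddsUninorm, sugenoNeg]

theorem oddsUninorm_sugenoNeg_one_one (c : K) : oddsUninorm c (sugenoNeg c 1) 1 = 1 := by
  simp [oddsUninorm, sugenoNeg]

end Field

section UnitInterval

open Set

variable {K : Type*} [Field K] [LinearOrder K] [IsStrictOrderedRing K] {c c' x y : K}

theorem one_add_sub_one_mul_pos (hc : 0 < c) (hx : x ∈ Icc 0 1) : 0 < 1 + (c - 1) * x := by
  obtain rfl | x_pos := hx.1.eq_or_lt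
  · simp
  · linarith [mul_pos hc x_pos, hx.2]

theorem one_sub_mul_add_mul_one_sub_eq_zero_iff (hx : x ∈ Icc 0 1) (hy : y ∈ Icc 0 1) :
    (1 - x) * y + x * (1 - y) = 0 ↔ (x = 0 ∧ y = 0) ∨ (x = 1 ∧ y = 1) := by
  rw [add_eq_zero_iff_of_nonneg (mul_nonneg (sub_nonneg.2 hx.2) hy.1)
    (mul_nonneg hx.1 (sub_nonneg.2 hy.2)), mul_eq_zero, mul_eq_zero, sub_eq_zero, sub_eq_zero]
  grind

theorem oddsUninorm_sugenoNeg_of_mem_Icc (hc : 0 < c) (hx : x ∈ Icc 0 1) (hy : y ∈ Icc 0 1)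
    (h₀ : ¬(x = 0 ∧ y = 0)) (h₁ : ¬(x = 1 ∧ y = 1)) :
    oddsUninorm c (sugenoNeg c x) y = (1 - x) * y / ((1 - x) * y + x * (1 - y)) :=
  oddsUninorm_sugenoNeg hc.ne' (one_add_sub_one_mul_pos hc hx).ne' <|
    (one_sub_mul_add_mul_one_sub_eq_zero_iff hx hy).not.2 (not_or_intro h₀ h₁)

theorem oddsUninorm_sugenoNeg_eq_oddsUninorm_sugenoNeg (hc : 0 < c) (hc' : 0 < c')
    (hx : x ∈ Icc 0 1) (hy : y ∈ Icc 0 1) :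
    oddsUninorm c (sugenoNeg c x) y = oddsUninorm c' (sugenoNeg c' x) y := by
  by_cases h₀ : x = 0 ∧ y = 0
  · rw [h₀.1, h₀.2, oddsUninorm_sugenoNeg_zero_zero, oddsUninorm_sugenoNeg_zero_zero]
  by_cases h₁ : x = 1 ∧ y = 1
  · rw [h₁.1, h₁.2, oddsUninorm_sugenoNeg_one_one, oddsUninorm_sugenoNeg_one_one]
  rw [oddsUninorm_sugenoNeg_of_mem_Icc hc hx hy h₀ h₁,
    oddsUninorm_sugenoNeg_of_mem_Icc hc' hx hy h₀ h₁]

theorem stmt4_general (hc : 0 < c) (hc' : 0 < c') :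
    (∀ x ∈ Icc (0 : K) 1, ∀ y ∈ Icc (0 : K) 1,
      oddsUninorm c (sugenoNeg c x) y = oddsUninorm c' (sugenoNeg c' x) y) ∧
    (∀ x ∈ Icc (0 : K) 1, ∀ y ∈ Icc (0 : K) 1, ¬(x = 0 ∧ y = 0) → ¬(x = 1 ∧ y = 1) →
      oddsUninorm c (sugenoNeg c x) y = (1 - x) * y / ((1 - x) * y + x * (1 - y))) ∧
    oddsUninorm c (sugenoNeg c 0) 0 = 1 ∧ oddsUninorm c (sugenoNeg c 1) 1 = 1 ∧
    oddsUninorm c' (sugenoNeg c' 0) 0 = 1 ∧ oddsUninorm c' (sugenoNeg c' 1) 1 = 1 :=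
  ⟨fun _ hx _ hy ↦ oddsUninorm_sugenoNeg_eq_oddsUninorm_sugenoNeg hc hc' hx hy,
    fun _ hx _ hy ↦ oddsUninorm_sugenoNeg_of_mem_Icc hc hx hy,
    oddsUninorm_sugenoNeg_zero_zero c, oddsUninorm_sugenoNeg_one_one c,
    oddsUninorm_sugenoNeg_zero_zero c', oddsUninorm_sugenoNeg_one_one c'⟩

end UnitInterval

theorem Nex1_eq_sugenoNeg : Nex1 = sugenoNeg 1 := by
  funext x
  simp [Nex1, sugenoNeg]

theorem Nex2_eq_sugenoNeg : Nex2 = sugenoNeg 3 := by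
  funext x
  norm_num [Nex2, sugenoNeg]

theorem Uex1_eq_oddsUninorm : Uex1 = oddsUninorm 1 := by
  funext x y
  simp only [Uex1, oddsUninorm, one_mul]

theorem Uex2_eq_oddsUninorm : Uex2 = oddsUninorm 3 := rfl

theorem stmt4 :
    (∀ x ∈ Set.Icc (0:ℝ) 1, ∀ y ∈ Set.Icc (0:ℝ) 1, Uex1 (Nex1 x) y = Uex2 (Nex2 x) y) ∧
    (∀ x ∈ Set.Icc (0:ℝ) 1, ∀ y ∈ Set.Icc (0:ℝ) 1, ¬(x = 0 ∧ y = 0) → ¬(x = 1 ∧ y = 1) →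
      Uex1 (Nex1 x) y = (1-x)*y / ((1-x)*y + x*(1-y))) ∧
    Uex1 (Nex1 0) 0 = 1 ∧ Uex1 (Nex1 1) 1 = 1 ∧
    Uex2 (Nex2 0) 0 = 1 ∧ Uex2 (Nex2 1) 1 = 1 := by
  rw [Nex1_eq_sugenoNeg, Nex2_eq_sugenoNeg, Uex1_eq_oddsUninorm, Uex2_eq_oddsUninorm]
  exact stmt4_general one_pos three_pos
end

section
/- Let N₁, N₂ : [0,1] → [0,1] be continuous fuzzy negations and U₁, U₂ : [0,1]² → [0,1] disjunctive uninorms with neutral elements e₁, e₂ ∈ (0,1) respectively, such that U₁(N₁(x), y) = U₂(N₂(x), y) for all x, y ∈ [0,1]. If e₁ ≠ e₂, or N₁ ≠ N₂, or U₁ ≠ U₂, then: (i) e₁ ≠ e₂ and N₁ ≠ N₂ and U₁ ≠ U₂; (ii) the function f₁ : [0,1] → [0,1] given by f₁(x) = U₁(x, e₂) is continuous and increasing with f₁(0) = 0 and f₁(1) = 1; (iii) the function f₂ : [0,1] → [0,1] given by f₂(x) = U₂(x, e₁) is continuous and increasing with f₂(0) = 0 and f₂(1) = 1. -/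
/-!
Every value in `[0,1]` is taken by `N₁` and by `N₂`. Setting `y = e₂` in
`U₁ (N₁ x) y = U₂ (N₂ x) y` gives `U₁ (N₁ x) e₂ = N₂ x`, so the increasing function
`fun x => U₁ x e₂` maps `[0,1]` onto `[0,1]`: it has no jumps and fixes the endpoints.
If `e₁ = e₂`, the same identity reads `N₁ = N₂`; if `N₁ = N₂`, then `U₁ = U₂` because `N₁` is onto;
if `U₁ = U₂`, then `e₁ = e₂` because neutral elements are unique.
-/

open Set

section MonotoneOn

variable {α β : Type*} {f : α → β}

theorem continuousOn_of_monotoneOn_of_ordConnected_image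
    [LinearOrder α] [TopologicalSpace α] [OrderTopology α]
    [LinearOrder β] [TopologicalSpace β] [OrderTopology β] [DenselyOrdered β]
    {s : Set α} (hf : MonotoneOn f s) (himage : (f '' s).OrdConnected) : ContinuousOn f s := by
  have hmono : Monotone (s.imageFactorization f) := fun x y hxy => hf x.2 y.2 hxy
  have hcont : @Continuous s (f '' s) (Preorder.topology s) _ (s.imageFactorization f) :=
    letI := Preorder.topology s
    haveI : OrderTopology s := ⟨rfl⟩
    hmono.continuous_of_surjective imageFactorization_surjective
  -- The subspace topology of `s` may be strictly finer than its order topology.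
  replace hcont : Continuous (s.imageFactorization f) :=
    continuous_le_dom (induced_topology_le_preorder Iff.rfl) hcont
  exact continuousOn_iff_continuous_domRestrict.2 (continuous_subtype_val.comp hcont)

variable [Preorder α] [PartialOrder β] {a b : α} {c d : β}

theorem apply_left_eq_of_monotoneOn_of_image_Icc (hab : a ≤ b) (hcd : c ≤ d)
    (hf : MonotoneOn f (Icc a b)) (himage : f '' Icc a b = Icc c d) : f a = c :=
  (hf.map_isLeast (isLeast_Icc hab)).unique (himage ▸ isLeast_Icc hcd)

theorem apply_right_eq_of_monotoneOn_of_image_Icc (hab : a ≤ b) (hcd : c ≤ d)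
    (hf : MonotoneOn f (Icc a b)) (himage : f '' Icc a b = Icc c d) : f b = d :=
  (hf.map_isGreatest (isGreatest_Icc hab)).unique (himage ▸ isGreatest_Icc hcd)

end MonotoneOn

/-- `e` is a two-sided neutral element of the binary operation `U` on `s`. The operation is a total
function, of which only the values on `s` matter, and `s` need not be closed under it. -/
structure IsNeutralOn {α : Type*} (U : α → α → α) (s : Set α) (e : α) : Prop where
  mem : e ∈ s
  left_neutral : ∀ x ∈ s, U e x = x
  right_neutral : ∀ x ∈ s, U x e = x

namespace IsNeutralOn

variable {α : Type*} {U V : α → α → α} {s : Set α} {e e' : α}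

theorem unique (he : IsNeutralOn U s e) (he' : IsNeutralOn U s e') : e = e' :=
  (he'.right_neutral e he.mem).symm.trans (he.left_neutral e' he'.mem)

theorem congr (he : IsNeutralOn U s e) (hUV : ∀ x ∈ s, ∀ y ∈ s, U x y = V x y) :
    IsNeutralOn V s e where
  mem := he.mem
  left_neutral x hx := (hUV e he.mem x hx).symm.trans (he.left_neutral x hx)
  right_neutral x hx := (hUV x hx e he.mem).symm.trans (he.right_neutral x hx)

end IsNeutralOn

section ReparametrizedOperations

variable {ι α : Type*} {d : Set ι} {s : Set α} {n₁ n₂ : ι → α} {U₁ U₂ : α → α → α} {e e₁ e₂ : α}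

theorem eqOn_apply_neutral (he₂ : IsNeutralOn U₂ s e₂) (hn₂ : MapsTo n₂ d s)
    (heq : ∀ t ∈ d, ∀ y ∈ s, U₁ (n₁ t) y = U₂ (n₂ t) y) :
    EqOn (fun t => U₁ (n₁ t) e₂) n₂ d := fun t ht =>
  (heq t ht e₂ he₂.mem).trans (he₂.right_neutral (n₂ t) (hn₂ ht))

theorem image_apply_neutral (he₂ : IsNeutralOn U₂ s e₂) (hn₁ : n₁ '' d = s) (hn₂ : n₂ '' d = s)
    (heq : ∀ t ∈ d, ∀ y ∈ s, U₁ (n₁ t) y = U₂ (n₂ t) y) :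
    (fun x => U₁ x e₂) '' s = s :=
  calc (fun x => U₁ x e₂) '' s = (fun x => U₁ x e₂) '' (n₁ '' d) := by rw [hn₁]
    _ = (fun t => U₁ (n₁ t) e₂) '' d := image_image _ _ _
    _ = n₂ '' d := (eqOn_apply_neutral he₂ (mapsTo_iff_image_subset.2 hn₂.subset) heq).image_eq
    _ = s := hn₂

theorem eqOn_of_common_neutral (he₁ : IsNeutralOn U₁ s e) (he₂ : IsNeutralOn U₂ s e)
    (hn₁ : MapsTo n₁ d s) (hn₂ : MapsTo n₂ d s)
    (heq : ∀ t ∈ d, ∀ y ∈ s, U₁ (n₁ t) y = U₂ (n₂ t) y) :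
    EqOn n₁ n₂ d := fun t ht =>
  (he₁.right_neutral (n₁ t) (hn₁ ht)).symm.trans (eqOn_apply_neutral he₂ hn₂ heq ht)

theorem operations_eq_of_eqOn (hn₁ : SurjOn n₁ d s)
    (heq : ∀ t ∈ d, ∀ y ∈ s, U₁ (n₁ t) y = U₂ (n₂ t) y) (hn : EqOn n₁ n₂ d) :
    ∀ x ∈ s, ∀ y ∈ s, U₁ x y = U₂ x y := by
  intro x hx y hy
  obtain ⟨t, ht, rfl⟩ := hn₁ hx
  rw [heq t ht y hy, hn ht]

theorem neutral_eq_tfae (he₁ : IsNeutralOn U₁ s e₁) (he₂ : IsNeutralOn U₂ s e₂)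
    (hn₁ : n₁ '' d = s) (hn₂ : MapsTo n₂ d s)
    (heq : ∀ t ∈ d, ∀ y ∈ s, U₁ (n₁ t) y = U₂ (n₂ t) y) :
    [e₁ = e₂, EqOn n₁ n₂ d, ∀ x ∈ s, ∀ y ∈ s, U₁ x y = U₂ x y].TFAE := by
  obtain ⟨hsurj, hmaps⟩ := image_eq_iff_surjOn_mapsTo.1 hn₁
  tfae_have 1 → 2 := fun h => eqOn_of_common_neutral he₁ (h ▸ he₂) hmaps hn₂ heq
  tfae_have 2 → 3 := operations_eq_of_eqOn hsurj heq
  tfae_have 3 → 1 := fun h => (he₁.congr h).unique he₂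
  tfae_finish

variable [LinearOrder α] [TopologicalSpace α] [OrderTopology α] [DenselyOrdered α] {a b : α}

theorem continuousOn_monotoneOn_and_fixes_endpoints (he₂ : IsNeutralOn U₂ (Icc a b) e₂)
    (hmono : ∀ z ∈ Icc a b, MonotoneOn (fun x => U₁ x z) (Icc a b))
    (hn₁ : n₁ '' d = Icc a b) (hn₂ : n₂ '' d = Icc a b)
    (heq : ∀ t ∈ d, ∀ y ∈ Icc a b, U₁ (n₁ t) y = U₂ (n₂ t) y) :
    ContinuousOn (fun x => U₁ x e₂) (Icc a b) ∧ MonotoneOn (fun x => U₁ x e₂) (Icc a b) ∧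
      U₁ a e₂ = a ∧ U₁ b e₂ = b := by
  have hab : a ≤ b := he₂.mem.1.trans he₂.mem.2
  have himage := image_apply_neutral he₂ hn₁ hn₂ heq
  have hf := hmono e₂ he₂.mem
  have hconn : ((fun x => U₁ x e₂) '' Icc a b).OrdConnected := by
    rw [himage]
    exact ordConnected_Icc
  exact ⟨continuousOn_of_monotoneOn_of_ordConnected_image hf hconn, hf,
    apply_left_eq_of_monotoneOn_of_image_Icc (f := fun x => U₁ x e₂) hab hab hf himage,
    apply_right_eq_of_monotoneOn_of_image_Icc (f := fun x => U₁ x e₂) hab hab hf himage⟩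

theorem stmt5_general (he₁ : IsNeutralOn U₁ (Icc a b) e₁) (he₂ : IsNeutralOn U₂ (Icc a b) e₂)
    (hmono₁ : ∀ z ∈ Icc a b, MonotoneOn (fun x => U₁ x z) (Icc a b))
    (hmono₂ : ∀ z ∈ Icc a b, MonotoneOn (fun x => U₂ x z) (Icc a b))
    (hn₁ : n₁ '' d = Icc a b) (hn₂ : n₂ '' d = Icc a b)
    (heq : ∀ t ∈ d, ∀ y ∈ Icc a b, U₁ (n₁ t) y = U₂ (n₂ t) y) :
    [e₁ ≠ e₂, ∃ t ∈ d, n₁ t ≠ n₂ t, ∃ x ∈ Icc a b, ∃ y ∈ Icc a b, U₁ x y ≠ U₂ x y].TFAE ∧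
    (ContinuousOn (fun x => U₁ x e₂) (Icc a b) ∧ MonotoneOn (fun x => U₁ x e₂) (Icc a b) ∧
      U₁ a e₂ = a ∧ U₁ b e₂ = b) ∧
    (ContinuousOn (fun x => U₂ x e₁) (Icc a b) ∧ MonotoneOn (fun x => U₂ x e₁) (Icc a b) ∧
      U₂ a e₁ = a ∧ U₂ b e₁ = b) := by
  have htfae := neutral_eq_tfae he₁ he₂ hn₁ (mapsTo_iff_image_subset.2 hn₂.subset) heq
  refine ⟨?_, continuousOn_monotoneOn_and_fixes_endpoints he₂ hmono₁ hn₁ hn₂ heq,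
    continuousOn_monotoneOn_and_fixes_endpoints he₁ hmono₂ hn₂ hn₁
      fun t ht y hy => (heq t ht y hy).symm⟩
  simpa [EqOn, -mem_Icc] using htfae.not

end ReparametrizedOperations

theorem IsFuzzyNegation.image_Icc {N : ℝ → ℝ} (hN : IsFuzzyNegation N)
    (hc : ContinuousOn N (Icc 0 1)) : N '' Icc 0 1 = Icc 0 1 := by
  obtain ⟨-, h0, h1, hanti⟩ := hN
  rw [hc.image_Icc_of_antitoneOn zero_le_one hanti, h0, h1]

namespace IsUninorm

variable {U : ℝ → ℝ → ℝ} {e : ℝ}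

theorem isNeutralOn (hU : IsUninorm U e) : IsNeutralOn U (Icc 0 1) e := by
  obtain ⟨he, -, hcomm, -, -, -, hneutral⟩ := hU
  exact ⟨he, fun x hx => (hcomm e he x hx).trans (hneutral x hx), hneutral⟩

theorem monotoneOn_left (hU : IsUninorm U e) :
    ∀ z ∈ Icc 0 1, MonotoneOn (fun x => U x z) (Icc 0 1) := by
  obtain ⟨-, -, -, -, -, hmono, -⟩ := hU
  exact fun z hz x hx y hy hxy => hmono x hx y hy z hz hxy

end IsUninorm

theorem stmt5 (N₁ N₂ : ℝ → ℝ) (hN₁ : IsFuzzyNegation N₁) (hN₂ : IsFuzzyNegation N₂)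
    (hN₁c : ContinuousOn N₁ (Set.Icc 0 1)) (hN₂c : ContinuousOn N₂ (Set.Icc 0 1))
    (U₁ U₂ : ℝ → ℝ → ℝ) (e₁ e₂ : ℝ)
    (he₁ : e₁ ∈ Set.Ioo (0:ℝ) 1) (he₂ : e₂ ∈ Set.Ioo (0:ℝ) 1)
    (hU₁ : IsUninorm U₁ e₁) (hU₂ : IsUninorm U₂ e₂)
    (hd₁ : U₁ 1 0 = 1) (hd₂ : U₂ 1 0 = 1)
    (heq : ∀ x ∈ Set.Icc (0:ℝ) 1, ∀ y ∈ Set.Icc (0:ℝ) 1, U₁ (N₁ x) y = U₂ (N₂ x) y)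
    (hdiff : e₁ ≠ e₂ ∨ (∃ x ∈ Set.Icc (0:ℝ) 1, N₁ x ≠ N₂ x) ∨
      (∃ x ∈ Set.Icc (0:ℝ) 1, ∃ y ∈ Set.Icc (0:ℝ) 1, U₁ x y ≠ U₂ x y)) :
    (e₁ ≠ e₂ ∧ (∃ x ∈ Set.Icc (0:ℝ) 1, N₁ x ≠ N₂ x) ∧
      (∃ x ∈ Set.Icc (0:ℝ) 1, ∃ y ∈ Set.Icc (0:ℝ) 1, U₁ x y ≠ U₂ x y)) ∧
    (ContinuousOn (fun x => U₁ x e₂) (Set.Icc 0 1) ∧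
      MonotoneOn (fun x => U₁ x e₂) (Set.Icc 0 1) ∧ U₁ 0 e₂ = 0 ∧ U₁ 1 e₂ = 1) ∧
    (ContinuousOn (fun x => U₂ x e₁) (Set.Icc 0 1) ∧
      MonotoneOn (fun x => U₂ x e₁) (Set.Icc 0 1) ∧ U₂ 0 e₁ = 0 ∧ U₂ 1 e₁ = 1) := by
  obtain ⟨htfae, hmaps⟩ := stmt5_general hU₁.isNeutralOn hU₂.isNeutralOn hU₁.monotoneOn_left
    hU₂.monotoneOn_left (hN₁.image_Icc hN₁c) (hN₂.image_Icc hN₂c) heq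
  have hne : e₁ ≠ e₂ := by
    rcases hdiff with he | hN | hU
    exacts [he, (htfae.out 1 0).1 hN, (htfae.out 2 0).1 hU]
  exact ⟨⟨hne, (htfae.out 0 1).1 hne, (htfae.out 0 2).1 hne⟩, hmaps⟩
end

section
/- Let N : [0,1] → [0,1] be a continuous fuzzy negation, U : [0,1]² → [0,1] a disjunctive uninorm with neutral element e ∈ (0,1), and I(x,y) = U(N(x), y). Suppose there exists α ∈ (0,1) with α ≠ e such that s ↦ U(s, α) is continuous and increasing with U(0, α) = 0 and U(1, α) = 1. Define N^α(x) = I(x, α) for x ∈ [0,1]. Then N^α is a continuous fuzzy negation, and the function U* : [0,1]² → [0,1] defined by U*(x,y) = I(ℜ_{N^α}(x), y) satisfies U*(N^α(x), y) = I(x, y) for all x, y ∈ [0,1]. -/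
open Classical in
/-- The modified pseudo-inverse `ℜ_M` of a fuzzy negation `M`:
`ℜ_M 0 = 1` and `ℜ_M x = sup {y ∈ [0,1] | M y > x}` for `x ∈ (0,1]`. -/
noncomputable def pseudoInv (M : ℝ → ℝ) : ℝ → ℝ := fun x =>
  if x = 0 then 1 else sSup {y | y ∈ Set.Icc (0:ℝ) 1 ∧ M y > x}

/-!
Since `U · α` runs continuously from `0` to `1`, it takes the value `e` at some `β`. By
associativity `U · β` then undoes `U · α`, so `U · α` is injective. The pseudo-inverse of a
continuous fuzzy negation `M` is a right inverse of `M`; applied to `M = N^α = U (N ·) α` this says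
that `N` composed with `U · α` takes the same value at `ℜ_M (M x)` and at `x`, and injectivity of
`U · α` leaves `N (ℜ_M (M x)) = N x`.
-/

open Set

theorem apply_eq_of_isLUB_setOf_lt {X Y : Type*}
    [LinearOrder X] [TopologicalSpace X] [OrderTopology X] [DenselyOrdered X]
    [LinearOrder Y] [TopologicalSpace Y] [OrderClosedTopology Y]
    {f : X → Y} {a b r : X} {c : Y} (hf : ContinuousOn f (Icc a b)) (hb : f b ≤ c)
    (hne : {y | y ∈ Icc a b ∧ c < f y}.Nonempty)
    (hr : IsLUB {y | y ∈ Icc a b ∧ c < f y} r) : f r = c := by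
  have closed_ge : IsClosed (Icc a b ∩ f ⁻¹' Ici c) :=
    hf.preimage_isClosed_of_isClosed isClosed_Icc isClosed_Ici
  have closed_le : IsClosed (Icc a b ∩ f ⁻¹' Iic c) :=
    hf.preimage_isClosed_of_isClosed isClosed_Icc isClosed_Iic
  obtain ⟨hr_mem, hr_ge⟩ : r ∈ Icc a b ∩ f ⁻¹' Ici c :=
    have hsub : {y | y ∈ Icc a b ∧ c < f y} ⊆ Icc a b ∩ f ⁻¹' Ici c :=
      fun _ hy ↦ ⟨hy.1, hy.2.le⟩
    closure_minimal hsub closed_ge (hr.mem_closure hne)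
  refine le_antisymm ?_ hr_ge
  rcases hr_mem.2.eq_or_lt with rfl | hrb
  · exact hb
  · have above : Ioc r b ⊆ Icc a b ∩ f ⁻¹' Iic c := fun y hy ↦
      have hy_mem : y ∈ Icc a b := ⟨hr_mem.1.trans hy.1.le, hy.2⟩
      ⟨hy_mem, not_lt.mp fun hc ↦ hy.1.not_ge (hr.1 ⟨hy_mem, hc⟩)⟩
    have hr_closure : r ∈ closure (Ioc r b) := by
      rw [closure_Ioc hrb.ne]
      exact left_mem_Icc.mpr hrb.le
    exact (closure_minimal above closed_le hr_closure).2

theorem pseudoInv_mem_Icc (M : ℝ → ℝ) (c : ℝ) : pseudoInv M c ∈ Icc (0 : ℝ) 1 := by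
  unfold pseudoInv
  split_ifs
  · exact right_mem_Icc.mpr zero_le_one
  · exact ⟨Real.sSup_nonneg fun _ hy ↦ hy.1.1, Real.sSup_le (fun _ hy ↦ hy.1.2) zero_le_one⟩

theorem rightInvOn_pseudoInv {M : ℝ → ℝ} (hM : ContinuousOn M (Icc 0 1))
    (hM0 : M 0 = 1) (hM1 : M 1 = 0) : RightInvOn (pseudoInv M) M (Icc 0 1) := by
  intro c hc
  unfold pseudoInv
  split_ifs with hc0
  · rw [hM1, hc0]
  rcases eq_empty_or_nonempty {y | y ∈ Icc (0 : ℝ) 1 ∧ M y > c} with hS | hS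
  · -- This happens only for `c = 1 = M 0`, and the junk value `sSup ∅ = 0` is then the right one.
    have h0 : M 0 ≤ c := not_lt.mp fun h ↦
      (hS.le ⟨left_mem_Icc.mpr zero_le_one, h⟩ : (0 : ℝ) ∈ (∅ : Set ℝ))
    rw [hS, Real.sSup_empty]
    exact le_antisymm h0 (hc.2.trans_eq hM0.symm)
  · exact apply_eq_of_isLUB_setOf_lt hM (hM1.trans_le hc.1) hS
      (isLUB_csSup hS ⟨1, fun _ hy ↦ hy.1.2⟩)

theorem IsFuzzyNegation.comp_monotoneOn {N g : ℝ → ℝ} (hN : IsFuzzyNegation N)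
    (hg : MapsTo g (Icc 0 1) (Icc 0 1)) (hmono : MonotoneOn g (Icc 0 1))
    (hg0 : g 0 = 0) (hg1 : g 1 = 1) :
    IsFuzzyNegation (g ∘ N) := by
  obtain ⟨hN_mem, hN0, hN1, hN_anti⟩ := hN
  refine ⟨fun x hx ↦ hg (hN_mem x hx), ?_, ?_, fun x hx y hy hxy ↦
    hmono (hN_mem y hy) (hN_mem x hx) (hN_anti x hx y hy hxy)⟩
  · rw [Function.comp_apply, hN0, hg1]
  · rw [Function.comp_apply, hN1, hg0]

theorem apply_pseudoInv_comp {N g : ℝ → ℝ} (hN : MapsTo N (Icc 0 1) (Icc 0 1))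
    (hg : InjOn g (Icc 0 1)) (hneg : IsFuzzyNegation (g ∘ N))
    (hcont : ContinuousOn (g ∘ N) (Icc 0 1)) {x : ℝ} (hx : x ∈ Icc (0 : ℝ) 1) :
    N (pseudoInv (g ∘ N) (g (N x))) = N x :=
  have ⟨hmaps, h0, h1, _⟩ := hneg
  hg (hN (pseudoInv_mem_Icc _ _)) (hN hx) (rightInvOn_pseudoInv hcont h0 h1 (hmaps x hx))

namespace IsUninorm

variable {U : ℝ → ℝ → ℝ} {e α : ℝ}

theorem mapsTo_left (hU : IsUninorm U e) (hα : α ∈ Icc (0 : ℝ) 1) :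
    MapsTo (U · α) (Icc 0 1) (Icc 0 1) :=
  fun s hs ↦ hU.2.1 s hs α hα

theorem monotoneOn_left_s7 (hU : IsUninorm U e) (hα : α ∈ Icc (0 : ℝ) 1) :
    MonotoneOn (U · α) (Icc 0 1) :=
  have ⟨_, _, _, _, _, hmono, _⟩ := hU
  fun s hs t ht hst ↦ hmono s hs t ht α hα hst

theorem leftInvOn_of_apply_eq_neutral (hU : IsUninorm U e) {β : ℝ} (hα : α ∈ Icc (0 : ℝ) 1)
    (hβ : β ∈ Icc (0 : ℝ) 1) (hβα : U β α = e) : LeftInvOn (U · β) (U · α) (Icc 0 1) := by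
  obtain ⟨_, _, hcomm, hassoc, _, _, hneutral⟩ := hU
  intro s hs
  calc U (U s α) β = U s (U α β) := hassoc s hs α hα β hβ
    _ = U s e := by rw [hcomm α hα β hβ, hβα]
    _ = s := hneutral s hs

theorem injOn_left_of_continuousOn (hU : IsUninorm U e) (hα : α ∈ Icc (0 : ℝ) 1)
    (hcont : ContinuousOn (U · α) (Icc 0 1)) (h0 : U 0 α = 0) (h1 : U 1 α = 1) :
    InjOn (U · α) (Icc 0 1) := by
  have he : e ∈ Icc (U 0 α) (U 1 α) := by
    rw [h0, h1]
    exact hU.1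
  obtain ⟨β, hβ, hβα⟩ := intermediate_value_Icc zero_le_one hcont he
  exact (hU.leftInvOn_of_apply_eq_neutral hα hβ hβα).injOn

end IsUninorm

theorem stmt7_general {N : ℝ → ℝ} (hN : IsFuzzyNegation N) (hNc : ContinuousOn N (Icc 0 1))
    {U : ℝ → ℝ → ℝ} {e : ℝ} (hU : IsUninorm U e) {α : ℝ} (hα : α ∈ Icc (0 : ℝ) 1)
    (hcutc : ContinuousOn (fun s => U s α) (Icc 0 1)) (h0 : U 0 α = 0) (h1 : U 1 α = 1) :
    IsFuzzyNegation (fun x => U (N x) α) ∧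
    ContinuousOn (fun x => U (N x) α) (Icc 0 1) ∧
    (∀ x ∈ Icc (0 : ℝ) 1, ∀ y ∈ Icc (0 : ℝ) 1,
      U (N (pseudoInv (fun s => U (N s) α) (U (N x) α))) y = U (N x) y) := by
  have hN_maps : MapsTo N (Icc 0 1) (Icc 0 1) := hN.1
  have hneg : IsFuzzyNegation ((U · α) ∘ N) :=
    hN.comp_monotoneOn (hU.mapsTo_left hα) (hU.monotoneOn_left_s7 hα) h0 h1
  have hcont : ContinuousOn ((U · α) ∘ N) (Icc 0 1) := hcutc.comp hNc hN_maps
  have hinj : InjOn (U · α) (Icc 0 1) := hU.injOn_left_of_continuousOn hα hcutc h0 h1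
  exact ⟨hneg, hcont, fun x hx y _ ↦
    congrArg (U · y) (apply_pseudoInv_comp hN_maps hinj hneg hcont hx)⟩

theorem stmt7 (N : ℝ → ℝ) (hN : IsFuzzyNegation N) (hNc : ContinuousOn N (Set.Icc 0 1))
    (U : ℝ → ℝ → ℝ) (e : ℝ) (he : e ∈ Set.Ioo (0:ℝ) 1)
    (hU : IsUninorm U e) (hd : U 1 0 = 1)
    (α : ℝ) (hα : α ∈ Set.Ioo (0:ℝ) 1) (hαe : α ≠ e)
    (hcutc : ContinuousOn (fun s => U s α) (Set.Icc 0 1))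
    (hcutm : MonotoneOn (fun s => U s α) (Set.Icc 0 1))
    (h0 : U 0 α = 0) (h1 : U 1 α = 1) :
    IsFuzzyNegation (fun x => U (N x) α) ∧
    ContinuousOn (fun x => U (N x) α) (Set.Icc 0 1) ∧
    (∀ x ∈ Set.Icc (0:ℝ) 1, ∀ y ∈ Set.Icc (0:ℝ) 1,
      U (N (pseudoInv (fun s => U (N s) α) (U (N x) α))) y = U (N x) y) :=
  stmt7_general hN hNc hU (Set.Ioo_subset_Icc_self hα) hcutc h0 h1
end

section
/- Let U : [0,1]² → [0,1] be a uninorm with neutral element e ∈ [0,1], and suppose x, z ∈ [0,1] satisfy U(z, x) = e. Then U(U(v, z), x) = v for every v ∈ [0,1]; consequently the function s ↦ U(s, x) is surjective onto [0,1], and being increasing and surjective it is continuous. -/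
open Set

theorem leftInvOn_of_assoc_of_eq_right_id {α : Type*} {U : α → α → α} {s : Set α} {e x z : α}
    (hassoc : ∀ a ∈ s, ∀ b ∈ s, ∀ c ∈ s, U (U a b) c = U a (U b c))
    (hid : ∀ a ∈ s, U a e = a) (hx : x ∈ s) (hz : z ∈ s) (hzx : U z x = e) :
    LeftInvOn (fun a => U a x) (fun a => U a z) s := fun v hv =>
  calc
    U (U v z) x = U v (U z x) := hassoc v hv z hz x hx
    _ = U v e := by rw [hzx]
    _ = v := hid v hv

theorem continuousOn_of_monotoneOn_of_surjOn {α β : Type*} [LinearOrder α] [TopologicalSpace α]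
    [OrderTopology α] [LinearOrder β] [TopologicalSpace β] [OrderTopology β] [DenselyOrdered β]
    {f : α → β} {s : Set α} {t : Set β} [OrdConnected s] [OrdConnected t]
    (hmono : MonotoneOn f s) (hmaps : MapsTo f s t) (hsurj : SurjOn f s t) :
    ContinuousOn f s := by
  have hrestrict_mono : Monotone (hmaps.restrict f s t) := fun a b hab =>
    hmono a.2 b.2 hab
  have hrestrict_cont : Continuous (hmaps.restrict f s t) :=
    hrestrict_mono.continuous_of_surjective (hmaps.restrict_surjective_iff.2 hsurj)
  exact continuousOn_iff_continuous_domRestrict.2 (continuous_subtype_val.comp hrestrict_cont)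

theorem stmt9_general {α : Type*} [LinearOrder α] [TopologicalSpace α] [OrderTopology α]
    [DenselyOrdered α] {s : Set α} [OrdConnected s] {U : α → α → α} {e x z : α}
    (hmem : ∀ a ∈ s, ∀ b ∈ s, U a b ∈ s)
    (hassoc : ∀ a ∈ s, ∀ b ∈ s, ∀ c ∈ s, U (U a b) c = U a (U b c))
    (hmono : MonotoneOn (fun a => U a x) s)
    (hid : ∀ a ∈ s, U a e = a) (hx : x ∈ s) (hz : z ∈ s) (hzx : U z x = e) :
    (∀ v ∈ s, U (U v z) x = v) ∧
    (∀ w ∈ s, ∃ a ∈ s, U a x = w) ∧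
    ContinuousOn (fun a => U a x) s := by
  have hinv : LeftInvOn (fun a => U a x) (fun a => U a z) s :=
    leftInvOn_of_assoc_of_eq_right_id hassoc hid hx hz hzx
  have hsurj : SurjOn (fun a => U a x) s s := hinv.surjOn fun a ha => hmem a ha z hz
  have hmaps : MapsTo (fun a => U a x) s s := fun a ha => hmem a ha x hx
  exact ⟨hinv, hsurj, continuousOn_of_monotoneOn_of_surjOn hmono hmaps hsurj⟩

theorem stmt9 (U : ℝ → ℝ → ℝ) (e : ℝ) (he : e ∈ Set.Icc (0:ℝ) 1)
    (hU : IsUninorm U e)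
    (x z : ℝ) (hx : x ∈ Set.Icc (0:ℝ) 1) (hz : z ∈ Set.Icc (0:ℝ) 1)
    (hzx : U z x = e) :
    (∀ v ∈ Set.Icc (0:ℝ) 1, U (U v z) x = v) ∧
    (∀ w ∈ Set.Icc (0:ℝ) 1, ∃ s ∈ Set.Icc (0:ℝ) 1, U s x = w) ∧
    ContinuousOn (fun s => U s x) (Set.Icc 0 1) := by
  obtain ⟨_, hmem, _, hassoc, _, hmono, hid⟩ := hU
  exact stmt9_general hmem hassoc (fun a ha b hb => hmono a ha b hb x hx) hid hx hz hzx
end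

section
/- Let U : [0,1]² → [0,1] be a disjunctive uninorm with neutral element e ∈ (0,1) and let x ∈ (0,1), x ≠ e, be such that the function s ↦ U(x, s) is continuous with range [0,1]. Then: (i) there exists y ∈ (0,1) with U(x, y) = e, and if x < e then y > e while if x > e then y < e; (ii) the function s ↦ U(x, s) is strictly increasing; (iii) the function s ↦ U(y, s) is continuous, strictly increasing, and has range [0,1]. -/
/-!
If `U x y = e` then, by associativity, the translations `U x` and `U y` are mutually inverse. Being
monotone, they are order automorphisms, hence strictly increasing homeomorphisms fixing the
endpoints. The position of `y` relative to `e` and to the endpoints is then read off by comparing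
the values of `U x`, which sends `y` to `e` and `e` to `x`.
-/

open Set

/-- A uninorm with neutral element `e` on a subset `s` of an arbitrary ordered type: a commutative
monoid structure on `s` whose translations are monotone. It extends `IsUninorm`, the case of
the real unit interval. The operation is a total function on `α`, of which only the values on `s`
matter; monotonicity in the first variable follows from commutativity and is not repeated. -/
structure IsUninormOn {α : Type*} [Preorder α] (s : Set α) (U : α → α → α) (e : α) : Prop where
  neutral_mem : e ∈ s
  mem : ∀ x ∈ s, ∀ y ∈ s, U x y ∈ s
  comm : ∀ x ∈ s, ∀ y ∈ s, U x y = U y x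
  assoc : ∀ x ∈ s, ∀ y ∈ s, ∀ z ∈ s, U (U x y) z = U x (U y z)
  monotoneOn : ∀ x ∈ s, MonotoneOn (U x) s
  right_neutral : ∀ x ∈ s, U x e = x

theorem IsUninorm.isUninormOn {U : ℝ → ℝ → ℝ} {e : ℝ} (hU : IsUninorm U e) :
    IsUninormOn (Icc 0 1) U e := by
  obtain ⟨neutral_mem, mem, comm, assoc, mono_right, -, right_neutral⟩ := hU
  exact ⟨neutral_mem, mem, comm, assoc, fun x hx y hy z hz => mono_right x hx y hy z hz,
    right_neutral⟩

theorem continuousOn_of_strictMonoOn_of_ordConnected {α β : Type*} [LinearOrder α]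
    [TopologicalSpace α] [OrderTopology α] [LinearOrder β] [TopologicalSpace β] [OrderTopology β]
    {f : α → β} {s : Set α} [OrdConnected s] [OrdConnected (f '' s)] (hf : StrictMonoOn f s) :
    ContinuousOn f s :=
  continuousOn_iff_continuous_domRestrict.2 <|
    continuous_subtype_val.comp (hf.orderIso f s).continuous

namespace IsUninormOn

section Preorder

variable {α : Type*} [Preorder α] {s : Set α} {U : α → α → α} {e x y : α}

theorem leftInvOn (hU : IsUninormOn s U e) (hx : x ∈ s) (hy : y ∈ s) (hxy : U x y = e) :
    LeftInvOn (U x) (U y) s := fun t ht =>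
  calc U x (U y t) = U (U x y) t := (hU.assoc x hx y hy t ht).symm
    _ = U e t := by rw [hxy]
    _ = U t e := hU.comm e hU.neutral_mem t ht
    _ = t := hU.right_neutral t ht

theorem image_eq (hU : IsUninormOn s U e) (hx : x ∈ s) (hy : y ∈ s) (hxy : U x y = e) :
    U x '' s = s :=
  ((hU.leftInvOn hx hy hxy).surjOn (hU.mem y hy)).image_eq_of_mapsTo (hU.mem x hx)

end Preorder

section PartialOrder

variable {α : Type*} [PartialOrder α] {s : Set α} {U : α → α → α} {a b e x y : α}

theorem strictMonoOn (hU : IsUninormOn s U e) (hx : x ∈ s) (hy : y ∈ s) (hxy : U x y = e) :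
    StrictMonoOn (U x) s :=
  have hyx : U y x = e := (hU.comm y hy x hx).trans hxy
  (hU.monotoneOn x hx).strictMonoOn_of_injOn (hU.leftInvOn hy hx hyx).injOn

theorem apply_of_isLeast (hU : IsUninormOn s U e) (hx : x ∈ s) (hy : y ∈ s) (hxy : U x y = e)
    (ha : IsLeast s a) : U x a = a := by
  have h := (hU.monotoneOn x hx).map_isLeast ha
  rw [hU.image_eq hx hy hxy] at h
  exact h.unique ha

theorem apply_of_isGreatest (hU : IsUninormOn s U e) (hx : x ∈ s) (hy : y ∈ s)
    (hxy : U x y = e) (hb : IsGreatest s b) : U x b = b := by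
  have h := (hU.monotoneOn x hx).map_isGreatest hb
  rw [hU.image_eq hx hy hxy] at h
  exact h.unique hb

end PartialOrder

section LinearOrder

variable {α : Type*} [LinearOrder α] {s : Set α} {U : α → α → α} {a b e x y : α}

theorem continuousOn [TopologicalSpace α] [OrderTopology α] [hs : OrdConnected s]
    (hU : IsUninormOn s U e) (hx : x ∈ s) (hy : y ∈ s) (hxy : U x y = e) :
    ContinuousOn (U x) s :=
  have : OrdConnected (U x '' s) := (hU.image_eq hx hy hxy).symm ▸ hs
  continuousOn_of_strictMonoOn_of_ordConnected (hU.strictMonoOn hx hy hxy)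

theorem lt_inverse_iff (hU : IsUninormOn s U e) (hx : x ∈ s) (hy : y ∈ s) (hxy : U x y = e)
    {t : α} (ht : t ∈ s) : t < y ↔ U x t < e := by
  rw [← (hU.strictMonoOn hx hy hxy).lt_iff_lt ht hy, hxy]

theorem inverse_lt_iff (hU : IsUninormOn s U e) (hx : x ∈ s) (hy : y ∈ s) (hxy : U x y = e)
    {t : α} (ht : t ∈ s) : y < t ↔ e < U x t := by
  rw [← (hU.strictMonoOn hx hy hxy).lt_iff_lt hy ht, hxy]

theorem neutral_lt_inverse_iff (hU : IsUninormOn s U e) (hx : x ∈ s) (hy : y ∈ s)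
    (hxy : U x y = e) : e < y ↔ x < e := by
  rw [hU.lt_inverse_iff hx hy hxy hU.neutral_mem, hU.right_neutral x hx]

theorem inverse_lt_neutral_iff (hU : IsUninormOn s U e) (hx : x ∈ s) (hy : y ∈ s)
    (hxy : U x y = e) : y < e ↔ e < x := by
  rw [hU.inverse_lt_iff hx hy hxy hU.neutral_mem, hU.right_neutral x hx]

theorem inverse_mem_Ioo (hU : IsUninormOn (Icc a b) U e) (he : e ∈ Ioo a b)
    (hx : x ∈ Icc a b) (hy : y ∈ Icc a b) (hxy : U x y = e) : y ∈ Ioo a b := by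
  have hab : a ≤ b := (he.1.trans he.2).le
  have hUa : U x a = a := hU.apply_of_isLeast hx hy hxy (isLeast_Icc hab)
  have hUb : U x b = b := hU.apply_of_isGreatest hx hy hxy (isGreatest_Icc hab)
  constructor
  · rw [hU.lt_inverse_iff hx hy hxy (left_mem_Icc.2 hab), hUa]
    exact he.1
  · rw [hU.inverse_lt_iff hx hy hxy (right_mem_Icc.2 hab), hUb]
    exact he.2

end LinearOrder

end IsUninormOn

theorem stmt10_general {α : Type*} [LinearOrder α] [TopologicalSpace α] [OrderTopology α]
    {a b e x : α} {U : α → α → α} (hU : IsUninormOn (Icc a b) U e) (he : e ∈ Ioo a b)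
    (hx : x ∈ Icc a b) (hex : e ∈ U x '' Icc a b) :
    StrictMonoOn (U x) (Icc a b) ∧
    ∃ y ∈ Ioo a b, U x y = e ∧ (x < e → e < y) ∧ (e < x → y < e) ∧
      ContinuousOn (U y) (Icc a b) ∧ StrictMonoOn (U y) (Icc a b) ∧
      U y '' Icc a b = Icc a b := by
  obtain ⟨y, hy, hxy⟩ := hex
  have hyx : U y x = e := (hU.comm y hy x hx).trans hxy
  exact ⟨hU.strictMonoOn hx hy hxy, y, hU.inverse_mem_Ioo he hx hy hxy, hxy,
    (hU.neutral_lt_inverse_iff hx hy hxy).2, (hU.inverse_lt_neutral_iff hx hy hxy).2,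
    hU.continuousOn hy hx hyx, hU.strictMonoOn hy hx hyx,
    hU.image_eq hy hx hyx⟩

theorem stmt10 (U : ℝ → ℝ → ℝ) (e : ℝ) (he : e ∈ Set.Ioo (0:ℝ) 1)
    (hU : IsUninorm U e) (hd : U 1 0 = 1)
    (x : ℝ) (hx : x ∈ Set.Ioo (0:ℝ) 1) (hxe : x ≠ e)
    (hcutc : ContinuousOn (fun s => U x s) (Set.Icc 0 1))
    (hcutr : (fun s => U x s) '' Set.Icc 0 1 = Set.Icc 0 1) :
    StrictMonoOn (fun s => U x s) (Set.Icc 0 1) ∧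
    ∃ y ∈ Set.Ioo (0:ℝ) 1, U x y = e ∧ (x < e → e < y) ∧ (e < x → y < e) ∧
      ContinuousOn (fun s => U y s) (Set.Icc 0 1) ∧
      StrictMonoOn (fun s => U y s) (Set.Icc 0 1) ∧
      (fun s => U y s) '' Set.Icc 0 1 = Set.Icc 0 1 := by
  exact stmt10_general hU.isUninormOn he (Ioo_subset_Icc_self hx)
    (hcutr.symm ▸ hU.isUninormOn.neutral_mem)
end

section
/- Let U : [0,1]² → [0,1] be a disjunctive uninorm with neutral element e ∈ (0,1) and let x ∈ (0,1), x < e, be such that s ↦ U(x, s) is continuous with range [0,1]; let y > e satisfy U(x, y) = e. Define x_U^(0) = e, x_U^(n) = U(x, x_U^(n−1)) and x_U^(−n) = U(y, x_U^(−n+1)) for n ≥ 1, set a = lim_{n→∞} x_U^(n), d = lim_{n→∞} x_U^(−n), and f^(n)(s) = U(x_U^(n), s) for n ∈ ℤ (so f^(0) = id). Then: (i) for every s ∈ (a, d) there is exactly one n ∈ ℤ with s ∈ (x_U^(n+1), x_U^(n)]; (ii) if s ∈ (x_U^(n+1), x_U^(n)] then f^(m)(s) ∈ (x_U^(n+m+1),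 x_U^(n+m)] for all m ∈ ℤ; (iii) if s ∈ (x_U^(n+1), x_U^(n)] and t ∈ (x_U^(m+1), x_U^(m)] then f^(−n)(s), f^(−m)(t) ∈ (x, e] and U(s, t) = f^(n+m)( U( f^(−n)(s), f^(−m)(t) ) ); in particular U restricted to (a,d)² is completely determined by the cut s ↦ U(x,s) and the restriction of U to [x,e]². -/
/-!
A uninorm turns `[0,1]` into an ordered commutative monoid with unit `e`. There `U x y = e` says
that `x` is invertible with inverse `y`, and the two recursions say that `xs n` is the integer
power `x ^ n`. These powers decrease because `x ≤ e`, so the intervals `(x ^ (n + 1), x ^ n]` are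
disjoint and cover `(a, d)`. Multiplication by `x ^ m` is an order automorphism with inverse
multiplication by `x ^ (-m)`, so it shifts these intervals by `m`, and cancelling inverse powers
gives `s * t = x ^ (n + m) * (x ^ (-n) * s * (x ^ (-m) * t))`.
-/

open Set Filter Topology

section Antitone

variable {α : Type*} [LinearOrder α] {f : ℤ → α}

theorem existsUnique_mem_Ioc_of_antitone (hf : Antitone f) {s : α} {N M : ℤ}
    (hN : f N < s) (hM : s ≤ f M) : ∃! n : ℤ, s ∈ Ioc (f (n + 1)) (f n) := by
  have hmono : Monotone fun i ↦ f (-i) := fun _ _ h ↦ hf (neg_le_neg h)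
  have hcover : s ∈ ⋃ i ∈ Ico (-N) (-M), Ioc (f (-i)) (f (-Order.succ i)) := by
    rw [hmono.biUnion_Ico_Ioc_map_succ]
    simpa only [neg_neg] using ⟨hN, hM⟩
  obtain ⟨i, -, hi⟩ := mem_iUnion₂.mp hcover
  have hs : s ∈ Ioc (f (-(i + 1) + 1)) (f (-(i + 1))) := by
    simpa [Order.succ_eq_add_one] using hi
  exact ⟨-(i + 1), hs, fun k hk ↦
    hf.pairwise_disjoint_on_Ioc_succ.eq (not_disjoint_iff.mpr ⟨s, hk, hs⟩)⟩

theorem existsUnique_mem_Ioc_of_tendsto [TopologicalSpace α] [OrderClosedTopology α]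
    (hf : Antitone f) {a d : α} (ha : Tendsto (fun n : ℕ ↦ f n) atTop (𝓝 a))
    (hd : Tendsto (fun n : ℕ ↦ f (-n)) atTop (𝓝 d)) {s : α} (hs : s ∈ Ioo a d) :
    ∃! n : ℤ, s ∈ Ioc (f (n + 1)) (f n) := by
  obtain ⟨N, hN⟩ := (ha.eventually_lt_const hs.1).exists
  obtain ⟨M, hM⟩ := (hd.eventually_const_lt hs.2).exists
  exact existsUnique_mem_Ioc_of_antitone hf hN hM.le

end Antitone

section OrderedMonoid

variable {M : Type*}

section Monoid

variable [Monoid M] [Preorder M] [MulLeftMono M] (u : Mˣ)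

theorem units_mul_le_mul_iff_left {s t : M} : u * s ≤ u * t ↔ s ≤ t := by
  refine ⟨fun h ↦ ?_, fun h ↦ by gcongr⟩
  calc s = ↑u⁻¹ * (u * s) := (u.inv_mul_cancel_left s).symm
    _ ≤ ↑u⁻¹ * (u * t) := by gcongr
    _ = t := u.inv_mul_cancel_left t

theorem units_mul_mem_Ioc_iff {s v w : M} : u * s ∈ Ioc (u * v) (u * w) ↔ s ∈ Ioc v w := by
  simp only [mem_Ioc, lt_iff_le_not_ge, units_mul_le_mul_iff_left]

theorem units_zpow_mul_mem_Ioc {n : ℤ} {s : M}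
    (hs : s ∈ Ioc (↑(u ^ (n + 1)) : M) ↑(u ^ n)) (m : ℤ) :
    ↑(u ^ m) * s ∈ Ioc (↑(u ^ (n + m + 1)) : M) ↑(u ^ (n + m)) := by
  have h := (units_mul_mem_Ioc_iff (u ^ m)).mpr hs
  rwa [← Units.val_mul, ← Units.val_mul, ← zpow_add, ← zpow_add, ← add_assoc, add_comm m n] at h

theorem units_zpow_neg_mul_mem_Ioc {n : ℤ} {s : M}
    (hs : s ∈ Ioc (↑(u ^ (n + 1)) : M) ↑(u ^ n)) : ↑(u ^ (-n)) * s ∈ Ioc (u : M) 1 := by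
  simpa using units_zpow_mul_mem_Ioc u hs (-n)

end Monoid

theorem mul_eq_units_mul_mul [CommMonoid M] (v w : Mˣ) (s t : M) :
    s * t = ↑(v * w) * (↑v⁻¹ * s * (↑w⁻¹ * t)) := by
  rw [Units.val_mul, mul_mul_mul_comm, v.mul_inv_cancel_left, w.mul_inv_cancel_left]

theorem mul_eq_units_zpow_mul_mul [CommMonoid M] (u : Mˣ) (n m : ℤ) (s t : M) :
    s * t = ↑(u ^ (n + m)) * (↑(u ^ (-n)) * s * (↑(u ^ (-m)) * t)) := by
  simpa only [zpow_add, zpow_neg] using mul_eq_units_mul_mul (u ^ n) (u ^ m) s t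

theorem zpow_right_antitone_of_le_one [Group M] [Preorder M] [MulLeftMono M] {a : M}
    (ha : a ≤ 1) : Antitone fun n : ℤ ↦ a ^ n :=
  antitone_int_of_succ_le fun n ↦ by
    rw [zpow_add_one]
    exact mul_le_of_le_one_right' ha

end OrderedMonoid

namespace IsUninorm

variable {U : ℝ → ℝ → ℝ} {e : ℝ}

theorem neutral_mem (hU : IsUninorm U e) : e ∈ Icc (0 : ℝ) 1 := hU.1

theorem map_neutral (hU : IsUninorm U e) {s : ℝ} (hs : s ∈ Icc (0 : ℝ) 1) : U s e = s :=
  hU.2.2.2.2.2.2 s hs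

theorem map_mem (hU : IsUninorm U e) {s t : ℝ} (hs : s ∈ Icc (0 : ℝ) 1)
    (ht : t ∈ Icc (0 : ℝ) 1) : U s t ∈ Icc (0 : ℝ) 1 :=
  hU.2.1 s hs t ht

theorem comm (hU : IsUninorm U e) {s t : ℝ} (hs : s ∈ Icc (0 : ℝ) 1)
    (ht : t ∈ Icc (0 : ℝ) 1) : U s t = U t s :=
  hU.2.2.1 s hs t ht

theorem assoc (hU : IsUninorm U e) {r s t : ℝ} (hr : r ∈ Icc (0 : ℝ) 1)
    (hs : s ∈ Icc (0 : ℝ) 1) (ht : t ∈ Icc (0 : ℝ) 1) : U (U r s) t = U r (U s t) :=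
  hU.2.2.2.1 r hr s hs t ht

theorem mono_left (hU : IsUninorm U e) {r s t : ℝ} (hr : r ∈ Icc (0 : ℝ) 1)
    (hs : s ∈ Icc (0 : ℝ) 1) (ht : t ∈ Icc (0 : ℝ) 1) (h : r ≤ s) : U r t ≤ U s t :=
  hU.2.2.2.2.2.1 r hr s hs t ht h

/-- The unit interval as the carrier of the ordered commutative monoid defined by the uninorm `U`,
with product `U` and unit `e`. It is a structure of its own, depending on `hU`, because
`Set.Icc (0 : ℝ) 1` already carries the multiplication of real numbers. -/
@[ext]
structure Carrier (_hU : IsUninorm U e) where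
  val : ℝ
  property : val ∈ Icc (0 : ℝ) 1

variable {hU : IsUninorm U e}

instance : PartialOrder hU.Carrier :=
  PartialOrder.lift Carrier.val fun _ _ ↦ Carrier.ext

instance : Mul hU.Carrier :=
  ⟨fun s t ↦ ⟨U s.val t.val, hU.map_mem s.property t.property⟩⟩

instance : One hU.Carrier :=
  ⟨⟨e, hU.neutral_mem⟩⟩

theorem Carrier.val_mul (s t : hU.Carrier) : (s * t).val = U s.val t.val := rfl

theorem Carrier.val_one : (1 : hU.Carrier).val = e := rfl

instance : CommMonoid hU.Carrier where
  mul_assoc r s t := Carrier.ext (hU.assoc r.property s.property t.property)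
  mul_comm s t := Carrier.ext (hU.comm s.property t.property)
  mul_one s := Carrier.ext (hU.map_neutral s.property)
  one_mul s := Carrier.ext <|
    (hU.comm hU.neutral_mem s.property).trans (hU.map_neutral s.property)

instance : IsOrderedMonoid hU.Carrier where
  mul_le_mul_left s t hst r := hU.mono_left s.property t.property r.property hst

theorem Carrier.exists_val_eq_of_mem_Ioc {v w : hU.Carrier} {s : ℝ} (hs : s ∈ Ioc v.val w.val) :
    ∃ r ∈ Ioc v w, r.val = s :=
  ⟨⟨s, v.property.1.trans hs.1.le, hs.2.trans w.property.2⟩, hs, rfl⟩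

theorem exists_units_val_eq (hU : IsUninorm U e) {x y : ℝ} (hx : x ∈ Icc (0 : ℝ) 1)
    (hy : y ∈ Icc (0 : ℝ) 1) (hxy : U x y = e) :
    ∃ u : hU.Carrierˣ, u.val.val = x ∧ u⁻¹.val.val = y :=
  ⟨Units.mkOfMulEqOne ⟨x, hx⟩ ⟨y, hy⟩ (Carrier.ext hxy), rfl, rfl⟩

theorem eq_val_zpow_of_recursion (u : hU.Carrierˣ) {xs : ℤ → ℝ} (hzero : xs 0 = e)
    (hsucc : ∀ n : ℕ, xs ((n : ℤ) + 1) = U u.val.val (xs (n : ℤ)))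
    (hpred : ∀ n : ℕ, xs (-(n : ℤ) - 1) = U u⁻¹.val.val (xs (-(n : ℤ)))) :
    xs = fun n ↦ (u ^ n).val.val := by
  funext n
  induction n with
  | zero => rw [hzero, zpow_zero, Units.val_one, Carrier.val_one]
  | succ n ih => rw [hsucc, ih, add_comm, zpow_one_add, Units.val_mul, Carrier.val_mul]
  | pred n ih =>
    rw [hpred, ih, sub_eq_neg_add, zpow_add, zpow_neg_one, Units.val_mul, Carrier.val_mul]

end IsUninorm

theorem stmt12_general {U : ℝ → ℝ → ℝ} {e : ℝ} (hU : IsUninorm U e)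
    {x y : ℝ} (hx : x ∈ Icc (0 : ℝ) 1) (hy : y ∈ Icc (0 : ℝ) 1) (hxe : x ≤ e) (hxy : U x y = e)
    {xs : ℤ → ℝ} (hxs0 : xs 0 = e)
    (hxsp : ∀ n : ℕ, xs ((n : ℤ) + 1) = U x (xs (n : ℤ)))
    (hxsn : ∀ n : ℕ, xs (-(n : ℤ) - 1) = U y (xs (-(n : ℤ))))
    {a d : ℝ} (ha : Tendsto (fun n : ℕ ↦ xs (n : ℤ)) atTop (𝓝 a))
    (hd : Tendsto (fun n : ℕ ↦ xs (-(n : ℤ))) atTop (𝓝 d)) :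
    (∀ s ∈ Ioo a d, ∃! n : ℤ, s ∈ Ioc (xs (n + 1)) (xs n)) ∧
    (∀ n m : ℤ, ∀ s ∈ Ioc (xs (n + 1)) (xs n),
      U (xs m) s ∈ Ioc (xs (n + m + 1)) (xs (n + m))) ∧
    (∀ n m : ℤ, ∀ s ∈ Ioc (xs (n + 1)) (xs n), ∀ t ∈ Ioc (xs (m + 1)) (xs m),
      U (xs (-n)) s ∈ Ioc x e ∧ U (xs (-m)) t ∈ Ioc x e ∧
      U s t = U (xs (n + m)) (U (U (xs (-n)) s) (U (xs (-m)) t))) := by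
  obtain ⟨u, rfl, rfl⟩ := hU.exists_units_val_eq hx hy hxy
  obtain rfl := IsUninorm.eq_val_zpow_of_recursion u hxs0 hxsp hxsn
  refine ⟨fun s hs ↦ ?_, fun n m s hs ↦ ?_, fun n m s hs t ht ↦ ?_⟩
  · have hanti : Antitone fun n : ℤ ↦ (u ^ n).val.val :=
      zpow_right_antitone_of_le_one (a := u) hxe
    exact existsUnique_mem_Ioc_of_tendsto hanti ha hd hs
  · obtain ⟨s', hs', rfl⟩ := IsUninorm.Carrier.exists_val_eq_of_mem_Ioc hs
    exact units_zpow_mul_mem_Ioc u hs' m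
  · obtain ⟨s', hs', rfl⟩ := IsUninorm.Carrier.exists_val_eq_of_mem_Ioc hs
    obtain ⟨t', ht', rfl⟩ := IsUninorm.Carrier.exists_val_eq_of_mem_Ioc ht
    exact ⟨units_zpow_neg_mul_mem_Ioc u hs', units_zpow_neg_mul_mem_Ioc u ht',
      congrArg IsUninorm.Carrier.val (mul_eq_units_zpow_mul_mul u n m s' t')⟩

theorem stmt12 (U : ℝ → ℝ → ℝ) (e : ℝ) (he : e ∈ Set.Ioo (0:ℝ) 1)
    (hU : IsUninorm U e) (hdisj : U 1 0 = 1)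
    (x : ℝ) (hx : x ∈ Set.Ioo (0:ℝ) 1) (hxe : x < e)
    (hcutc : ContinuousOn (fun s => U x s) (Set.Icc 0 1))
    (hcutr : (fun s => U x s) '' Set.Icc 0 1 = Set.Icc 0 1)
    (y : ℝ) (hy : y ∈ Set.Icc (0:ℝ) 1) (hye : e < y) (hxy : U x y = e)
    (xs : ℤ → ℝ) (hxs0 : xs 0 = e)
    (hxsp : ∀ n : ℕ, xs ((n : ℤ) + 1) = U x (xs (n : ℤ)))
    (hxsn : ∀ n : ℕ, xs (-(n : ℤ) - 1) = U y (xs (-(n : ℤ))))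
    (a d : ℝ)
    (ha : Filter.Tendsto (fun n : ℕ => xs (n : ℤ)) Filter.atTop (nhds a))
    (hd : Filter.Tendsto (fun n : ℕ => xs (-(n : ℤ))) Filter.atTop (nhds d)) :
    (∀ s ∈ Set.Ioo a d, ∃! n : ℤ, s ∈ Set.Ioc (xs (n + 1)) (xs n)) ∧
    (∀ n m : ℤ, ∀ s ∈ Set.Ioc (xs (n + 1)) (xs n),
      U (xs m) s ∈ Set.Ioc (xs (n + m + 1)) (xs (n + m))) ∧
    (∀ n m : ℤ, ∀ s ∈ Set.Ioc (xs (n + 1)) (xs n), ∀ t ∈ Set.Ioc (xs (m + 1)) (xs m),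
      U (xs (-n)) s ∈ Set.Ioc x e ∧ U (xs (-m)) t ∈ Set.Ioc x e ∧
      U s t = U (xs (n + m)) (U (U (xs (-n)) s) (U (xs (-m)) t))) :=
  stmt12_general hU (Set.Ioo_subset_Icc_self hx) hy hxe.le hxy hxs0 hxsp hxsn ha hd
end

section
/- Let U : [0,1]² → [0,1] be a disjunctive uninorm with neutral element e ∈ (0,1) and let x ∈ (0,1), x < e, be such that s ↦ U(x, s) is continuous with range [0,1]; let y > e satisfy U(x, y) = e. Define f(s) = U(x, s), x_U^(0) = e, x_U^(n) = U(x, x_U^(n−1)) and x_U^(−n) = U(y, x_U^(−n+1)) for n ≥ 1, a_x = lim_{n→∞} x_U^(n) and d_x = lim_{n→∞} x_U^(−n). Then: (i) f(s) ≠ s for all s ∈ (a_x, d_x); (ii) if f(s) = s for some s ∈ [0,1], then U(s, t) ∉ (a_x, d_x) for all t ∈ [0,1]. -/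
/-!
A fixed point of `U x` is also fixed by `U y`, which undoes `U x` because `U y x = e`. A monotone
map never carries a point across one of its fixed points. So a fixed point `s ≤ e` stays below
every `x_U^(n)`, hence below `a_x`, and a fixed point `s ≥ e` stays above every `x_U^(-n)`, hence
above `d_x`. Finally, by associativity, `U s t` is fixed by `U x` whenever `s` is.
-/

section

open Set Filter Function
open scoped Topology

variable {α : Type*} {S : Set α} {f g : α → α} {a c d s : α}

theorem eq_iterate_of_succ_eq {u : ℕ → α} (hu : ∀ n, u (n + 1) = f (u n)) (n : ℕ) :
    u n = f^[n] (u 0) := by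
  induction n with
  | zero => rfl
  | succ n ih => rw [hu, ih, iterate_succ_apply']

theorem isFixedPt_of_leftInvOn (hgf : LeftInvOn g f S) (hs : s ∈ S) (hfs : IsFixedPt f s) :
    IsFixedPt g s :=
  calc
    g s = g (f s) := congrArg g hfs.symm
    _ = s := hgf hs

theorem mapsTo_inter_Ici_of_isFixedPt [Preorder α] (hf : MonotoneOn f S) (hfS : MapsTo f S S)
    (hs : s ∈ S) (hfs : IsFixedPt f s) : MapsTo f (S ∩ Ici s) (S ∩ Ici s) :=
  fun _ ⟨htS, hst⟩ => ⟨hfS htS, hfs.symm.le.trans (hf hs htS hst)⟩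

theorem le_of_isFixedPt_of_tendsto_iterate [Preorder α] [TopologicalSpace α] [ClosedIciTopology α]
    (hf : MonotoneOn f S) (hfS : MapsTo f S S) (hs : s ∈ S) (hfs : IsFixedPt f s)
    (hc : c ∈ S) (hsc : s ≤ c) (ha : Tendsto (fun n => f^[n] c) atTop (𝓝 a)) : s ≤ a :=
  ge_of_tendsto' ha fun n =>
    ((mapsTo_inter_Ici_of_isFixedPt hf hfS hs hfs).iterate n ⟨hc, hsc⟩).2

theorem notMem_Ioo_of_isFixedPt_of_tendsto_iterate [LinearOrder α] [TopologicalSpace α]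
    [OrderClosedTopology α] (hf : MonotoneOn f S) (hfS : MapsTo f S S) (hg : MonotoneOn g S)
    (hgS : MapsTo g S S) (hs : s ∈ S) (hfs : IsFixedPt f s) (hgs : IsFixedPt g s) (hc : c ∈ S)
    (ha : Tendsto (fun n => f^[n] c) atTop (𝓝 a)) (hd : Tendsto (fun n => g^[n] c) atTop (𝓝 d)) :
    s ∉ Ioo a d := by
  rintro ⟨has, hsd⟩
  rcases le_total s c with hsc | hcs
  · exact has.not_ge (le_of_isFixedPt_of_tendsto_iterate hf hfS hs hfs hc hsc ha)
  · exact hsd.not_ge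
      (le_of_isFixedPt_of_tendsto_iterate (α := αᵒᵈ) hg.dual hgS hs hgs hc hcs hd)

theorem Ioo_subset_of_tendsto [LinearOrder α] [TopologicalSpace α] [OrderClosedTopology α]
    {ι κ : Type*} {l : Filter ι} {m : Filter κ} [l.NeBot] [m.NeBot] {u : ι → α} {v : κ → α}
    (hS : S.OrdConnected) (hu : ∀ i, u i ∈ S) (hv : ∀ j, v j ∈ S)
    (ha : Tendsto u l (𝓝 a)) (hd : Tendsto v m (𝓝 d)) : Ioo a d ⊆ S := by
  rintro s ⟨has, hsd⟩
  obtain ⟨i, hi⟩ := (ha.eventually_lt_const has).exists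
  obtain ⟨j, hj⟩ := (hd.eventually_const_lt hsd).exists
  exact hS.out (hu i) (hv j) ⟨hi.le, hj.le⟩

theorem stmt13_general [LinearOrder α] [TopologicalSpace α] [OrderClosedTopology α]
    (hS : S.OrdConnected) {U : α → α → α} {e : α}
    (hmem : ∀ p ∈ S, ∀ q ∈ S, U p q ∈ S)
    (hassoc : ∀ p ∈ S, ∀ q ∈ S, ∀ r ∈ S, U (U p q) r = U p (U q r))
    (hmono : ∀ p ∈ S, MonotoneOn (U p) S) (hneutral : ∀ p ∈ S, U e p = p)
    {x y : α} (hx : x ∈ S) (hy : y ∈ S) (hyx : U y x = e)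
    {xs : ℤ → α} (hxs0 : xs 0 ∈ S)
    (hxsp : ∀ n : ℕ, xs ((n : ℤ) + 1) = U x (xs (n : ℤ)))
    (hxsn : ∀ n : ℕ, xs (-(n : ℤ) - 1) = U y (xs (-(n : ℤ)))) {ax dx : α}
    (ha : Tendsto (fun n : ℕ => xs (n : ℤ)) atTop (𝓝 ax))
    (hd : Tendsto (fun n : ℕ => xs (-(n : ℤ))) atTop (𝓝 dx)) :
    (∀ s ∈ Ioo ax dx, U x s ≠ s) ∧
    (∀ s ∈ S, U x s = s → ∀ t ∈ S, U s t ∉ Ioo ax dx) := by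
  have pos_eq (n : ℕ) : xs n = (U x)^[n] (xs 0) :=
    eq_iterate_of_succ_eq (u := fun n : ℕ => xs n) (fun n => by exact_mod_cast hxsp n) n
  have neg_eq (n : ℕ) : xs (-n) = (U y)^[n] (xs 0) :=
    eq_iterate_of_succ_eq (u := fun n : ℕ => xs (-n))
      (fun n => by rw [← hxsn n, Nat.cast_succ, neg_add']) n
  simp only [pos_eq] at ha
  simp only [neg_eq] at hd
  have hxS : MapsTo (U x) S S := hmem x hx
  have hyS : MapsTo (U y) S S := hmem y hy
  have leftInv : LeftInvOn (U y) (U x) S := fun s hs => by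
    rw [← hassoc y hy x hx s hs, hyx, hneutral s hs]
  have fixed_notMem {s : α} (hs : s ∈ S) (hfix : U x s = s) : s ∉ Ioo ax dx :=
    notMem_Ioo_of_isFixedPt_of_tendsto_iterate (hmono x hx) hxS (hmono y hy) hyS hs hfix
      (isFixedPt_of_leftInvOn leftInv hs hfix) hxs0 ha hd
  have Ioo_subset : Ioo ax dx ⊆ S :=
    Ioo_subset_of_tendsto hS (fun n => hxS.iterate n hxs0) (fun n => hyS.iterate n hxs0) ha hd
  refine ⟨fun s hs hfix => fixed_notMem (Ioo_subset hs) hfix hs, fun s hs hfix t ht => ?_⟩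
  exact fixed_notMem (hmem s hs t ht) (by rw [← hassoc x hx s hs t ht, hfix])

end

theorem stmt13 (U : ℝ → ℝ → ℝ) (e : ℝ) (he : e ∈ Set.Ioo (0:ℝ) 1)
    (hU : IsUninorm U e) (hdisj : U 1 0 = 1)
    (x : ℝ) (hx : x ∈ Set.Ioo (0:ℝ) 1) (hxe : x < e)
    (hcutc : ContinuousOn (fun s => U x s) (Set.Icc 0 1))
    (hcutr : (fun s => U x s) '' Set.Icc 0 1 = Set.Icc 0 1)
    (y : ℝ) (hy : y ∈ Set.Icc (0:ℝ) 1) (hye : e < y) (hxy : U x y = e)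
    (xs : ℤ → ℝ) (hxs0 : xs 0 = e)
    (hxsp : ∀ n : ℕ, xs ((n : ℤ) + 1) = U x (xs (n : ℤ)))
    (hxsn : ∀ n : ℕ, xs (-(n : ℤ) - 1) = U y (xs (-(n : ℤ))))
    (ax dx : ℝ)
    (ha : Filter.Tendsto (fun n : ℕ => xs (n : ℤ)) Filter.atTop (nhds ax))
    (hd : Filter.Tendsto (fun n : ℕ => xs (-(n : ℤ))) Filter.atTop (nhds dx)) :
    (∀ s ∈ Set.Ioo ax dx, U x s ≠ s) ∧
    (∀ s ∈ Set.Icc (0:ℝ) 1, U x s = s →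
      ∀ t ∈ Set.Icc (0:ℝ) 1, U s t ∉ Set.Ioo ax dx) := by
  obtain ⟨heI, hmem, hcomm, hassoc, hmono, -, hneutral⟩ := hU
  have hxI := Set.Ioo_subset_Icc_self hx
  exact stmt13_general Set.ordConnected_Icc hmem hassoc
    (fun p hp q hq r hr => hmono p hp q hq r hr) (fun p hp => hcomm e heI p hp ▸ hneutral p hp)
    hxI hy (hcomm x hxI y hy ▸ hxy) (hxs0 ▸ heI) hxsp hxsn ha hd
end

section
/- Let f : [0,1] → [0,1] be a continuous, strictly increasing function with f(0) = 0, f(1) = 1, and f(y) = e for some y, e ∈ (0,1) with y > e; set x = f(e). Define f^(0) = id, f^(n) = f ∘ f^(n−1) and f^(−n) = f^{−1} ∘ f^(−n+1) for n ≥ 1, and set a = lim_{n→∞} f^(n)(x), d = lim_{n→∞} f^(−n)(x). Let F : [x,e]² → [f(x), e] be a commutative, non-decreasing function such that F(s, e) = s and F(s, x) = f(s) for all s ∈ [x,e], and such that for all s, t, u ∈ (x, e], if F(s,t) ∈ (f^(n+1)(e), f^(n)(e)] and F(t,u) ∈ (f^(m+1)(e), f^(m)(e)] for some n, m ∈ {0,1},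 then f^(m)( F(s, f^(−m)(F(t,u))) ) = f^(n)( F( f^(−n)(F(s,t)), u) ). Then the function U : (a,d)² → (a,d) defined by U(s,t) = f^(n+m)( F( f^(−n)(s), f^(−m)(t) ) ) whenever s ∈ (f^(n+1)(e), f^(n)(e)] and t ∈ (f^(m+1)(e), f^(m)(e)] for n, m ∈ ℤ is well defined, maps into (a,d), and is a uninorm on (a,d): it is commutative, associative, non-decreasing in each variable, and has neutral element e. -/
/-!
With `x = f e`, the interval `(x, e]` is a fundamental domain for the action of `ℤ` on `(a, d)` by
iterates of `f`, and `U` is the extension of `F` from `(x, e]²` that commutes with this action in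
each variable: `U (f^(k) s, f^(l) t) = f^(k + l) (F (s, t))`. The boundary values of `F` give
`f s ≤ F (s, t) ≤ s`, so `F (s, t)` lies at most one interval below `(x, e]`. Hence `n, m ∈ {0, 1}`
covers all cases of associativity, and monotonicity from one interval to a higher one
reduces to the chain `f^(n) (F (s, t)) ≤ f^(n) s ≤ f^(m + 1) s = f^(m) (f s) ≤ f^(m) (F (s, u))`
for `m < n`.
-/

open Set Filter Topology

section IntervalPartition

variable {α β ι : Type*}

theorem isGLB_range_of_tendsto_comp [TopologicalSpace α] [Preorder α] [OrderClosedTopology α]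
    [Preorder β] {l : Filter ι} [l.NeBot] {c : β → α} {u : ι → β} {a : α} (hc : Antitone c)
    (hu : Tendsto u l atTop) (ha : Tendsto (c ∘ u) l (𝓝 a)) : IsGLB (range c) a := by
  constructor
  · rintro _ ⟨b, rfl⟩
    exact le_of_tendsto ha ((hu.eventually_ge_atTop b).mono fun _ hb => hc hb)
  · exact fun _ hb => ge_of_tendsto' ha fun i => hb (mem_range_self (u i))

theorem isLUB_range_of_tendsto_comp [TopologicalSpace α] [Preorder α] [OrderClosedTopology α]
    [Preorder β] {l : Filter ι} [l.NeBot] {c : β → α} {u : ι → β} {d : α} (hc : Antitone c)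
    (hu : Tendsto u l atBot) (hd : Tendsto (c ∘ u) l (𝓝 d)) : IsLUB (range c) d :=
  isGLB_range_of_tendsto_comp (α := αᵒᵈ) (β := βᵒᵈ) hc.dual hu hd

theorem existsUnique_int_mem_Ioc [Preorder α] {c : ℤ → α} {s : α} (hc : Antitone c)
    (hs : s ∈ ⋃ n : ℤ, Ioc (c (n + 1)) (c n)) : ∃! n : ℤ, s ∈ Ioc (c (n + 1)) (c n) := by
  obtain ⟨n, hn⟩ := mem_iUnion.1 hs
  exact ⟨n, hn, fun m hm => hc.pairwise_disjoint_on_Ioc_succ.eq (not_disjoint_iff.2 ⟨s, hm, hn⟩)⟩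

theorem iUnion_Ioc_int_eq_Ioo [LinearOrder α] {c : ℤ → α} {a d : α} (hc : StrictAnti c)
    (ha : IsGLB (range c) a) (hd : IsLUB (range c) d) :
    ⋃ n : ℤ, Ioc (c (n + 1)) (c n) = Ioo a d := by
  apply Subset.antisymm
  · refine iUnion_subset fun n s hs => ⟨?_, ?_⟩
    · exact (ha.1 (mem_range_self (n + 1))).trans_lt hs.1
    · exact hs.2.trans_lt ((hc (sub_one_lt n)).trans_le (hd.1 (mem_range_self (n - 1))))
  · rintro s ⟨has, hsd⟩
    obtain ⟨_, ⟨N, rfl⟩, hN⟩ := (isGLB_lt_iff ha).1 has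
    obtain ⟨_, ⟨M, rfl⟩, hM⟩ := (lt_isLUB_iff hd).1 hsd
    obtain ⟨n, hn, hmax⟩ := Int.exists_greatest_of_bdd (P := fun n => s ≤ c n)
      ⟨N, fun _ hz => (hc.lt_iff_gt.1 (hN.trans_le hz)).le⟩ ⟨M, hM.le⟩
    exact mem_iUnion.2 ⟨n, lt_of_not_ge fun h => (lt_add_one n).not_ge (hmax _ h), hn⟩

end IntervalPartition

/-- `U` is a uninorm on `S` with neutral element `e`. Monotonicity and neutrality are required in
one argument only; commutativity yields the other. -/
structure IsUninormOn_s16 {α : Type*} [Preorder α] (U : α → α → α) (S : Set α) (e : α) : Prop where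
  neutral_mem : e ∈ S
  map_mem : ∀ s ∈ S, ∀ t ∈ S, U s t ∈ S
  comm : ∀ s ∈ S, ∀ t ∈ S, U s t = U t s
  assoc : ∀ s ∈ S, ∀ t ∈ S, ∀ u ∈ S, U (U s t) u = U s (U t u)
  monotoneOn : ∀ s ∈ S, MonotoneOn (U s) S
  apply_neutral : ∀ s ∈ S, U s e = s

theorem IsUninormOn_s16.monotoneOn_left {α : Type*} [Preorder α] {U : α → α → α} {S : Set α} {e u : α}
    (hU : IsUninormOn_s16 U S e) (hu : u ∈ S) : MonotoneOn (fun s => U s u) S := by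
  intro s hs t ht hst
  simpa only [hU.comm _ hu _ hs, hU.comm _ hu _ ht] using hU.monotoneOn u hu hs ht hst

/-- `fn n`, `n ∈ ℤ`, are the two-sided iterates of `f` on `I`. When `f` is injective on
`I`, `succ` also pins down the negative ones, since `f ∘ fn (n - 1)` has to equal `fn n`. -/
structure IsIteratesOn {α : Type*} (f : α → α) (I : Set α) (fn : ℤ → α → α) : Prop where
  zero : ∀ s ∈ I, fn 0 s = s
  succ : ∀ n, ∀ s ∈ I, fn (n + 1) s = f (fn n s)
  map_mem : ∀ n, ∀ s ∈ I, fn n s ∈ I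

namespace IsIteratesOn

variable {α : Type*} {f : α → α} {I : Set α} {fn : ℤ → α → α} {s t e : α}

theorem one (h : IsIteratesOn f I fn) (hs : s ∈ I) : fn 1 s = f s := by
  simpa only [zero_add, h.zero s hs] using h.succ 0 s hs

theorem apply_mem (h : IsIteratesOn f I fn) (hs : s ∈ I) : f s ∈ I :=
  h.one hs ▸ h.map_mem 1 s hs

theorem add (h : IsIteratesOn f I fn) (hf : InjOn f I) (n m : ℤ) (hs : s ∈ I) :
    fn (n + m) s = fn n (fn m s) := by
  have hm := h.map_mem m s hs
  induction n with
  | zero => rw [zero_add, h.zero _ hm]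
  | succ i ih => rw [add_right_comm, h.succ _ s hs, ih, h.succ _ _ hm]
  | pred i ih =>
    apply hf (h.map_mem _ _ hs) (h.map_mem _ _ hm)
    rw [← h.succ _ _ hs, ← h.succ _ _ hm, ← add_right_comm, sub_add_cancel, ih]

theorem apply_neg (h : IsIteratesOn f I fn) (hf : InjOn f I) (n : ℤ) (hs : s ∈ I) :
    fn n (fn (-n) s) = s := by
  rw [← h.add hf _ _ hs, add_neg_cancel, h.zero s hs]

theorem neg_apply (h : IsIteratesOn f I fn) (hf : InjOn f I) (n : ℤ) (hs : s ∈ I) :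
    fn (-n) (fn n s) = s := by
  rw [← h.add hf _ _ hs, neg_add_cancel, h.zero s hs]

theorem add_one (h : IsIteratesOn f I fn) (hf : InjOn f I) (n : ℤ) (hs : s ∈ I) :
    fn (n + 1) s = fn n (f s) := by
  rw [h.add hf _ _ hs, h.one hs]

theorem Icc_subset [Preorder α] (h : IsIteratesOn f I fn) (hI : I.OrdConnected) (he : e ∈ I) :
    Icc (f e) e ⊆ I :=
  hI.out (h.apply_mem he) he

variable [LinearOrder α]

theorem strictMonoOn (h : IsIteratesOn f I fn) (hf : StrictMonoOn f I) (n : ℤ) :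
    StrictMonoOn (fn n) I := by
  intro s hs t ht hst
  induction n with
  | zero => rwa [h.zero s hs, h.zero t ht]
  | succ i ih =>
    rw [h.succ _ s hs, h.succ _ t ht]
    exact hf (h.map_mem _ s hs) (h.map_mem _ t ht) ih
  | pred i ih =>
    rwa [← hf.lt_iff_lt (h.map_mem _ s hs) (h.map_mem _ t ht), ← h.succ _ s hs, ← h.succ _ t ht,
      sub_add_cancel]

theorem antitone (h : IsIteratesOn f I fn) (hf : StrictMonoOn f I) (hs : s ∈ I) (hfs : f s ≤ s) :
    Antitone fun n => fn n s :=
  antitone_int_of_succ_le fun n => h.add_one hf.injOn n hs ▸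
    (h.strictMonoOn hf n).monotoneOn (h.apply_mem hs) hs hfs

theorem strictAnti (h : IsIteratesOn f I fn) (hf : StrictMonoOn f I) (hs : s ∈ I) (hfs : f s < s) :
    StrictAnti fun n => fn n s :=
  strictAnti_int_of_succ_lt fun n => h.add_one hf.injOn n hs ▸
    h.strictMonoOn hf n (h.apply_mem hs) hs hfs

theorem image_Ioc (h : IsIteratesOn f I fn) (hf : StrictMonoOn f I) (hI : I.OrdConnected)
    (he : e ∈ I) (n : ℤ) : fn n '' Ioc (f e) e = Ioc (fn (n + 1) e) (fn n e) := by
  have hn := h.strictMonoOn hf n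
  have hfe := h.apply_mem he
  rw [h.add_one hf.injOn n he]
  apply Subset.antisymm
  · rintro _ ⟨s, hs, rfl⟩
    have hsI := h.Icc_subset hI he (Ioc_subset_Icc_self hs)
    exact ⟨hn hfe hsI hs.1, hn.monotoneOn hsI he hs.2⟩
  · intro s hs
    have hsI : s ∈ I := hI.out (h.map_mem n _ hfe) (h.map_mem n e he) (Ioc_subset_Icc_self hs)
    have hneg := h.map_mem (-n) s hsI
    have hs' := h.apply_neg hf.injOn n hsI
    refine ⟨fn (-n) s, ⟨?_, ?_⟩, hs'⟩
    · exact (hn.lt_iff_lt hfe hneg).1 (hs'.symm ▸ hs.1)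
    · exact (hn.le_iff_le hneg he).1 (hs'.symm ▸ hs.2)

theorem isGLB_range (h : IsIteratesOn f I fn) (hf : StrictMonoOn f I) [TopologicalSpace α]
    [OrderClosedTopology α] (he : e ∈ I) (hfe : f e ≤ e) {a : α}
    (ha : Tendsto (fun n : ℕ => fn n (f e)) atTop (𝓝 a)) : IsGLB (range fun n => fn n e) a := by
  refine isGLB_range_of_tendsto_comp (h.antitone hf he hfe) (u := fun k : ℕ => (k : ℤ) + 1)
    (tendsto_atTop_add_const_right _ _ tendsto_natCast_atTop_atTop) ?_
  simpa only [Function.comp_def, h.add_one hf.injOn _ he] using ha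

theorem isLUB_range (h : IsIteratesOn f I fn) (hf : StrictMonoOn f I) [TopologicalSpace α]
    [OrderClosedTopology α] (he : e ∈ I) (hfe : f e ≤ e) {d : α}
    (hd : Tendsto (fun n : ℕ => fn (-n) (f e)) atTop (𝓝 d)) :
    IsLUB (range fun n => fn n e) d := by
  refine isLUB_range_of_tendsto_comp (h.antitone hf he hfe) (u := fun k : ℕ => -(k : ℤ) + 1)
    (tendsto_atBot_add_const_right _ _ (tendsto_neg_atTop_atBot.comp tendsto_natCast_atTop_atTop))
    ?_
  simpa only [Function.comp_def, h.add_one hf.injOn _ he] using hd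

end IsIteratesOn

/-- The local data on `[f e, e]²` from which a uninorm on the orbit of `(f e, e]` under the iterates
`fn` of `f` is generated. Associativity has to be twisted by iterates because `F` may take values
below `f e`. -/
structure IsUninormGenerator {α : Type*} [Preorder α] (f : α → α) (fn : ℤ → α → α) (e : α)
    (F : α → α → α) : Prop where
  comm : ∀ s ∈ Icc (f e) e, ∀ t ∈ Icc (f e) e, F s t = F t s
  monotoneOn : ∀ s ∈ Icc (f e) e, MonotoneOn (F s) (Icc (f e) e)
  apply_neutral : ∀ s ∈ Icc (f e) e, F s e = s
  apply_left_endpoint : ∀ s ∈ Icc (f e) e, F s (f e) = f s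
  assoc : ∀ s ∈ Ioc (f e) e, ∀ t ∈ Ioc (f e) e, ∀ u ∈ Ioc (f e) e, ∀ n m : ℤ,
    (n = 0 ∨ n = 1) → (m = 0 ∨ m = 1) →
    F s t ∈ Ioc (fn (n + 1) e) (fn n e) → F t u ∈ Ioc (fn (m + 1) e) (fn m e) →
    fn m (F s (fn (-m) (F t u))) = fn n (F (fn (-n) (F s t)) u)

namespace IsUninormGenerator

variable {α : Type*} {f : α → α} {I : Set α} {fn : ℤ → α → α} {e s t u v w : α}
  {F U : α → α → α}

theorem mem_Icc [Preorder α] (hF : IsUninormGenerator f fn e F) (hs : s ∈ Icc (f e) e)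
    (ht : t ∈ Icc (f e) e) : F s t ∈ Icc (f s) s := by
  have hfe : f e ≤ e := hs.1.trans hs.2
  constructor
  · exact hF.apply_left_endpoint s hs ▸ hF.monotoneOn s hs (left_mem_Icc.2 hfe) ht ht.1
  · exact (hF.monotoneOn s hs ht (right_mem_Icc.2 hfe) ht.2).trans_eq (hF.apply_neutral s hs)

theorem mem [Preorder α] (hF : IsUninormGenerator f fn e F) (h : IsIteratesOn f I fn)
    (hI : I.OrdConnected) (he : e ∈ I) (hs : s ∈ Icc (f e) e) (ht : t ∈ Icc (f e) e) : F s t ∈ I :=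
  h.Icc_subset hI (h.Icc_subset hI he hs) (hF.mem_Icc hs ht)

variable [LinearOrder α]

theorem exists_eq_iterate (hF : IsUninormGenerator f fn e F) (h : IsIteratesOn f I fn)
    (hf : StrictMonoOn f I) (hI : I.OrdConnected) (he : e ∈ I) (hs : s ∈ Ioc (f e) e)
    (ht : t ∈ Ioc (f e) e) :
    ∃ n : ℤ, (n = 0 ∨ n = 1) ∧ ∃ w ∈ Ioc (f e) e, fn n w = F s t := by
  have hsc := Ioc_subset_Icc_self hs
  have hmem := hF.mem_Icc hsc (Ioc_subset_Icc_self ht)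
  rcases lt_or_ge (f e) (F s t) with hlt | hle
  · exact ⟨0, .inl rfl, F s t, ⟨hlt, hmem.2.trans hs.2⟩,
      h.zero _ (hF.mem h hI he hsc (Ioc_subset_Icc_self ht))⟩
  · refine ⟨1, .inr rfl, (h.image_Ioc hf hI he 1).ge ⟨?_, ?_⟩⟩
    · rw [h.add_one hf.injOn 1 he, h.one (h.apply_mem he)]
      exact (hf (h.apply_mem he) (h.Icc_subset hI he hsc) hs.1).trans_le hmem.1
    · rwa [h.one he]

theorem assoc_iterate (hF : IsUninormGenerator f fn e F) (h : IsIteratesOn f I fn)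
    (hf : StrictMonoOn f I) (hI : I.OrdConnected) (he : e ∈ I) {n m : ℤ} (hn : n = 0 ∨ n = 1)
    (hm : m = 0 ∨ m = 1) (hs : s ∈ Ioc (f e) e) (ht : t ∈ Ioc (f e) e) (hu : u ∈ Ioc (f e) e)
    (hw : w ∈ Ioc (f e) e) (hv : v ∈ Ioc (f e) e) (hst : fn n w = F s t) (htu : fn m v = F t u) :
    fn n (F w u) = fn m (F s v) := by
  have hwI := h.Icc_subset hI he (Ioc_subset_Icc_self hw)
  have hvI := h.Icc_subset hI he (Ioc_subset_Icc_self hv)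
  have key := hF.assoc s hs t ht u hu n m hn hm
    (hst ▸ (h.image_Ioc hf hI he n).le (mem_image_of_mem _ hw))
    (htu ▸ (h.image_Ioc hf hI he m).le (mem_image_of_mem _ hv))
  rw [← hst, ← htu, h.neg_apply hf.injOn n hwI, h.neg_apply hf.injOn m hvI] at key
  exact key.symm

theorem iterate_le_iterate (hF : IsUninormGenerator f fn e F) (h : IsIteratesOn f I fn)
    (hf : StrictMonoOn f I) (hI : I.OrdConnected) (he : e ∈ I) {n m : ℤ} (hs : s ∈ Ioc (f e) e)
    (ht : t ∈ Ioc (f e) e) (hu : u ∈ Ioc (f e) e) (htu : fn n t ≤ fn m u) :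
    fn n (F s t) ≤ fn m (F s u) := by
  replace hs := Ioc_subset_Icc_self hs
  have htc := Ioc_subset_Icc_self ht
  have huc := Ioc_subset_Icc_self hu
  have hsI := h.Icc_subset hI he hs
  have hst := hF.mem_Icc hs htc
  have hsu := hF.mem_Icc hs huc
  have hstI := hF.mem h hI he hs htc
  have hsuI := hF.mem h hI he hs huc
  have hmn : m ≤ n := by
    have htn := (h.image_Ioc hf hI he n).le (mem_image_of_mem _ ht)
    have hum := (h.image_Ioc hf hI he m).le (mem_image_of_mem _ hu)
    exact Int.lt_add_one_iff.1 <| (h.strictAnti hf he (ht.1.trans_le ht.2)).lt_iff_gt.1 <|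
      htn.1.trans_le (htu.trans hum.2)
  rcases hmn.eq_or_lt with rfl | hlt
  · have htu' := ((h.strictMonoOn hf m).le_iff_le (h.Icc_subset hI he htc)
      (h.Icc_subset hI he huc)).1 htu
    exact (h.strictMonoOn hf m).monotoneOn hstI hsuI (hF.monotoneOn s hs htc huc htu')
  · calc fn n (F s t) ≤ fn n s := (h.strictMonoOn hf n).monotoneOn hstI hsI hst.2
      _ ≤ fn (m + 1) s := h.antitone hf hsI (hst.1.trans hst.2) hlt
      _ = fn m (f s) := h.add_one hf.injOn m hsI
      _ ≤ fn m (F s u) := (h.strictMonoOn hf m).monotoneOn (h.apply_mem hsI) hsuI hsu.1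

theorem extension_assoc (hF : IsUninormGenerator f fn e F) (h : IsIteratesOn f I fn)
    (hf : StrictMonoOn f I) (hI : I.OrdConnected) (he : e ∈ I)
    (hU : ∀ n m : ℤ, ∀ s ∈ Ioc (f e) e, ∀ t ∈ Ioc (f e) e,
      U (fn n s) (fn m t) = fn (n + m) (F s t))
    (hs : s ∈ Ioc (f e) e) (ht : t ∈ Ioc (f e) e) (hu : u ∈ Ioc (f e) e) (k l p : ℤ) :
    U (U (fn k s) (fn l t)) (fn p u) = U (fn k s) (U (fn l t) (fn p u)) := by
  obtain ⟨n, hn, w, hw, hst⟩ := hF.exists_eq_iterate h hf hI he hs ht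
  obtain ⟨m, hm, v, hv, htu⟩ := hF.exists_eq_iterate h hf hI he ht hu
  have hIcc : Ioc (f e) e ⊆ Icc (f e) e := Ioc_subset_Icc_self
  have hwI := h.Icc_subset hI he (hIcc hw)
  have hvI := h.Icc_subset hI he (hIcc hv)
  have hwuI := hF.mem h hI he (hIcc hw) (hIcc hu)
  have hsvI := hF.mem h hI he (hIcc hs) (hIcc hv)
  calc U (U (fn k s) (fn l t)) (fn p u) = U (fn (k + l + n) w) (fn p u) := by
        rw [hU k l s hs t ht, ← hst, ← h.add hf.injOn _ _ hwI]
    _ = fn (k + l + p) (fn n (F w u)) := by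
        rw [hU _ p w hw u hu, ← h.add hf.injOn _ _ hwuI, add_right_comm]
    _ = fn (k + l + p) (fn m (F s v)) := by
        rw [hF.assoc_iterate h hf hI he hn hm hs ht hu hw hv hst htu]
    _ = U (fn k s) (fn (l + p + m) v) := by
        rw [hU k _ s hs v hv, ← h.add hf.injOn _ _ hsvI, add_assoc k l p, add_assoc]
    _ = U (fn k s) (U (fn l t) (fn p u)) := by
        rw [hU l p t ht u hu, ← htu, ← h.add hf.injOn _ _ hvI]

theorem isUninormOn_iUnion (hF : IsUninormGenerator f fn e F) (h : IsIteratesOn f I fn)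
    (hf : StrictMonoOn f I) (hI : I.OrdConnected) (he : e ∈ I) (hfe : f e < e)
    (hU : ∀ n m : ℤ, ∀ s ∈ Ioc (f e) e, ∀ t ∈ Ioc (f e) e,
      U (fn n s) (fn m t) = fn (n + m) (F s t)) :
    IsUninormOn_s16 U (⋃ n : ℤ, fn n '' Ioc (f e) e) e := by
  have hFI {s t} (hs : s ∈ Ioc (f e) e) (ht : t ∈ Ioc (f e) e) : F s t ∈ I :=
    hF.mem h hI he (Ioc_subset_Icc_self hs) (Ioc_subset_Icc_self ht)
  have hIoc {s} (hs : s ∈ Ioc (f e) e) : s ∈ I := h.Icc_subset hI he (Ioc_subset_Icc_self hs)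
  have hmem {s} (n : ℤ) (hs : s ∈ Ioc (f e) e) : fn n s ∈ ⋃ n : ℤ, fn n '' Ioc (f e) e :=
    mem_iUnion.2 ⟨n, mem_image_of_mem _ hs⟩
  have hee : e ∈ Ioc (f e) e := right_mem_Ioc.2 hfe
  have he_mem := hmem 0 hee
  rw [h.zero e he] at he_mem
  refine ⟨he_mem, ?map_mem, ?comm, ?assoc, ?monotoneOn, ?apply_neutral⟩
  case map_mem =>
    rintro _ ⟨_, ⟨k, rfl⟩, s, hs, rfl⟩ _ ⟨_, ⟨l, rfl⟩, t, ht, rfl⟩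
    obtain ⟨n, -, w, hw, hst⟩ := hF.exists_eq_iterate h hf hI he hs ht
    rw [hU k l s hs t ht, ← hst, ← h.add hf.injOn _ _ (hIoc hw)]
    exact hmem _ hw
  case comm =>
    rintro _ ⟨_, ⟨k, rfl⟩, s, hs, rfl⟩ _ ⟨_, ⟨l, rfl⟩, t, ht, rfl⟩
    rw [hU k l s hs t ht, hU l k t ht s hs, add_comm,
      hF.comm s (Ioc_subset_Icc_self hs) t (Ioc_subset_Icc_self ht)]
  case assoc =>
    rintro _ ⟨_, ⟨k, rfl⟩, s, hs, rfl⟩ _ ⟨_, ⟨l, rfl⟩, t, ht, rfl⟩ _ ⟨_, ⟨p, rfl⟩, u, hu, rfl⟩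
    exact hF.extension_assoc h hf hI he hU hs ht hu k l p
  case monotoneOn =>
    rintro _ ⟨_, ⟨k, rfl⟩, s, hs, rfl⟩ _ ⟨_, ⟨l, rfl⟩, t, ht, rfl⟩ _ ⟨_, ⟨p, rfl⟩, u, hu, rfl⟩ htu
    rw [hU k l s hs t ht, hU k p s hs u hu, h.add hf.injOn _ _ (hFI hs ht),
      h.add hf.injOn _ _ (hFI hs hu)]
    exact (h.strictMonoOn hf k).monotoneOn (h.map_mem _ _ (hFI hs ht)) (h.map_mem _ _ (hFI hs hu))
      (hF.iterate_le_iterate h hf hI he hs ht hu htu)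
  case apply_neutral =>
    rintro _ ⟨_, ⟨k, rfl⟩, s, hs, rfl⟩
    simpa only [h.zero e he, add_zero, hF.apply_neutral s (Ioc_subset_Icc_self hs)]
      using hU k 0 s hs e hee

end IsUninormGenerator

theorem stmt16_general {α : Type*} [LinearOrder α] [TopologicalSpace α] [OrderClosedTopology α]
    {f : α → α} {I : Set α} {fn : ℤ → α → α} {a d e : α} {F U : α → α → α}
    (hI : I.OrdConnected) (hf : StrictMonoOn f I) (he : e ∈ I) (hfe : f e < e)
    (h : IsIteratesOn f I fn)
    (ha : Tendsto (fun n : ℕ => fn n (f e)) atTop (𝓝 a))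
    (hd : Tendsto (fun n : ℕ => fn (-n) (f e)) atTop (𝓝 d))
    (hF : IsUninormGenerator f fn e F)
    (hU : ∀ n m : ℤ, ∀ s ∈ Ioc (fn (n + 1) e) (fn n e), ∀ t ∈ Ioc (fn (m + 1) e) (fn m e),
      U s t = fn (n + m) (F (fn (-n) s) (fn (-m) t))) :
    (∀ s ∈ Ioo a d, ∃! n : ℤ, s ∈ Ioc (fn (n + 1) e) (fn n e)) ∧ IsUninormOn_s16 U (Ioo a d) e := by
  have hanti := h.strictAnti hf he hfe
  have hIoo : ⋃ n : ℤ, Ioc (fn (n + 1) e) (fn n e) = Ioo a d :=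
    iUnion_Ioc_int_eq_Ioo hanti (h.isGLB_range hf he hfe.le ha) (h.isLUB_range hf he hfe.le hd)
  refine ⟨fun s hs => existsUnique_int_mem_Ioc hanti.antitone (hIoo.ge hs), ?_⟩
  simp only [← hIoo, ← h.image_Ioc hf hI he] at hU ⊢
  refine hF.isUninormOn_iUnion h hf hI he hfe fun n m s hs t ht => ?_
  rw [hU n m _ (mem_image_of_mem _ hs) _ (mem_image_of_mem _ ht),
    h.neg_apply hf.injOn n (h.Icc_subset hI he (Ioc_subset_Icc_self hs)),
    h.neg_apply hf.injOn m (h.Icc_subset hI he (Ioc_subset_Icc_self ht))]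

theorem stmt16 (f : ℝ → ℝ)
    (hfc : ContinuousOn f (Set.Icc 0 1))
    (hfm : StrictMonoOn f (Set.Icc 0 1))
    (hfmaps : ∀ s ∈ Set.Icc (0:ℝ) 1, f s ∈ Set.Icc (0:ℝ) 1)
    (hf0 : f 0 = 0) (hf1 : f 1 = 1)
    (y e : ℝ) (hy : y ∈ Set.Ioo (0:ℝ) 1) (he : e ∈ Set.Ioo (0:ℝ) 1)
    (hye : e < y) (hfy : f y = e)
    (x : ℝ) (hx : x = f e)
    -- the iterates `f^(n)`, `n ∈ ℤ`, of `f`: `f^(0) = id`, `f^(n+1) = f ∘ f^(n)`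
    (fn : ℤ → ℝ → ℝ) (hfn0 : ∀ s, fn 0 s = s)
    (hfns : ∀ n : ℤ, ∀ s ∈ Set.Icc (0:ℝ) 1, fn (n + 1) s = f (fn n s))
    (hfnmaps : ∀ n : ℤ, ∀ s ∈ Set.Icc (0:ℝ) 1, fn n s ∈ Set.Icc (0:ℝ) 1)
    (a d : ℝ)
    (ha : Filter.Tendsto (fun n : ℕ => fn (n : ℤ) x) Filter.atTop (nhds a))
    (hd : Filter.Tendsto (fun n : ℕ => fn (-(n : ℤ)) x) Filter.atTop (nhds d))
    (F : ℝ → ℝ → ℝ)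
    (hFmaps : ∀ s ∈ Set.Icc x e, ∀ t ∈ Set.Icc x e, F s t ∈ Set.Icc (f x) e)
    (hFcomm : ∀ s ∈ Set.Icc x e, ∀ t ∈ Set.Icc x e, F s t = F t s)
    (hFmono : ∀ s ∈ Set.Icc x e, ∀ t ∈ Set.Icc x e, ∀ u ∈ Set.Icc x e,
      t ≤ u → F s t ≤ F s u)
    (hFe : ∀ s ∈ Set.Icc x e, F s e = s)
    (hFx : ∀ s ∈ Set.Icc x e, F s x = f s)
    (hFas : ∀ s ∈ Set.Ioc x e, ∀ t ∈ Set.Ioc x e, ∀ u ∈ Set.Ioc x e, ∀ n m : ℤ,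
      (n = 0 ∨ n = 1) → (m = 0 ∨ m = 1) →
      F s t ∈ Set.Ioc (fn (n + 1) e) (fn n e) → F t u ∈ Set.Ioc (fn (m + 1) e) (fn m e) →
      fn m (F s (fn (-m) (F t u))) = fn n (F (fn (-n) (F s t)) u))
    (U : ℝ → ℝ → ℝ)
    (hU : ∀ n m : ℤ, ∀ s ∈ Set.Ioc (fn (n + 1) e) (fn n e),
      ∀ t ∈ Set.Ioc (fn (m + 1) e) (fn m e),
      U s t = fn (n + m) (F (fn (-n) s) (fn (-m) t))) :
    -- well-definedness: the intervals `(f^(n+1)(e), f^(n)(e)]` partition `(a,d)`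
    (∀ s ∈ Set.Ioo a d, ∃! n : ℤ, s ∈ Set.Ioc (fn (n + 1) e) (fn n e)) ∧
    -- `U` maps `(a,d)²` into `(a,d)`
    (∀ s ∈ Set.Ioo a d, ∀ t ∈ Set.Ioo a d, U s t ∈ Set.Ioo a d) ∧
    -- commutativity
    (∀ s ∈ Set.Ioo a d, ∀ t ∈ Set.Ioo a d, U s t = U t s) ∧
    -- associativity
    (∀ s ∈ Set.Ioo a d, ∀ t ∈ Set.Ioo a d, ∀ u ∈ Set.Ioo a d,
      U (U s t) u = U s (U t u)) ∧
    -- monotonicity in each variable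
    (∀ s ∈ Set.Ioo a d, ∀ t ∈ Set.Ioo a d, ∀ u ∈ Set.Ioo a d, t ≤ u → U s t ≤ U s u) ∧
    (∀ s ∈ Set.Ioo a d, ∀ t ∈ Set.Ioo a d, ∀ u ∈ Set.Ioo a d, s ≤ t → U s u ≤ U t u) ∧
    -- neutral element
    (∀ s ∈ Set.Ioo a d, U s e = s) := by
  subst hx
  have hfe : f e < e := hfy ▸ hfm ⟨he.1.le, he.2.le⟩ ⟨hy.1.le, hy.2.le⟩ hye
  obtain ⟨hpart, hUninorm⟩ := stmt16_general ordConnected_Icc hfm ⟨he.1.le, he.2.le⟩ hfe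
    ⟨fun s _ => hfn0 s, hfns, hfnmaps⟩ ha hd
    ⟨hFcomm, fun s hs t ht u hu => hFmono s hs t ht u hu, hFe, hFx, hFas⟩ hU
  exact ⟨hpart, hUninorm.map_mem, hUninorm.comm, hUninorm.assoc,
    fun s hs t ht u hu => hUninorm.monotoneOn s hs ht hu,
    fun s hs t ht u hu => hUninorm.monotoneOn_left hu hs ht, hUninorm.apply_neutral⟩
end

section
/- Define U₁ : [0,1]² → [0,1] as follows: U₁(x,y) = 1 if max(x,y) = 1; U₁(x,y) = 0 if min(x,y) = 0 and max(x,y) < 1; and U₁(x,y) = min( x^(2^m), y^(2^n) ) whenever x ∈ (2^(−2^(n+1)), 2^(−2^n)] and y ∈ (2^(−2^(m+1)), 2^(−2^m)] for n, m ∈ ℤ. Then U₁ is well defined and is a disjunctive uninorm with neutral element 1/2; moreover, U₁(2^(−2^n), y) = y^(2^n) for all y ∈ (0,1) and all n ∈ ℤ. -/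
/-- The point `u^(n) = 2^(−2^n)` for `n ∈ ℤ`. -/
noncomputable def uPt (n : ℤ) : ℝ := (2 : ℝ) ^ (-((2 : ℝ) ^ n))

/-!
Every point of `(0,1)` is `2 ^ (-2 ^ s)` for a unique real `s`. This parametrisation reverses the
order, turns raising to the power `2 ^ m` into translation by `m`, and turns the half-open
intervals between consecutive points `uPt n` into the fibres of the floor. On parameters, `U₁`
becomes `(s, t) ↦ max (s + ⌊t⌋) (t + ⌊s⌋)`, which adds integer parts and takes the maximum of
fractional parts; so it makes `ℝ` an ordered commutative monoid with neutral element `0`, and `0`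
is the parameter of `1 / 2`. Adjoining `1` as an annihilator, and then `0` as an annihilator of
everything except `1`, keeps associativity and monotonicity.
-/

/-- `U` is the disjunctive extension to `[0,1]²` of an operation `V` on parameters, which `φ`
carries to the open interval `(0,1)`. Uninorms are built from ordered monoids in this way. -/
structure IsDisjunctiveExtension {α : Type*} (U : ℝ → ℝ → ℝ) (φ : α → ℝ) (V : α → α → α) :
    Prop where
  top : ∀ x ∈ Set.Icc (0 : ℝ) 1, ∀ y ∈ Set.Icc (0 : ℝ) 1, max x y = 1 → U x y = 1
  bot : ∀ x ∈ Set.Icc (0 : ℝ) 1, ∀ y ∈ Set.Icc (0 : ℝ) 1,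
    min x y = 0 → max x y < 1 → U x y = 0
  range_eq : Set.range φ = Set.Ioo 0 1
  map_op : ∀ s t, U (φ s) (φ t) = φ (V s t)

namespace IsDisjunctiveExtension

variable {α : Type*} {U : ℝ → ℝ → ℝ} {φ : α → ℝ} {V : α → α → α} {x y z : ℝ}

lemma apply_mem_Ioo (h : IsDisjunctiveExtension U φ V) (s : α) : φ s ∈ Set.Ioo (0 : ℝ) 1 :=
  h.range_eq ▸ Set.mem_range_self s

lemma apply_mem_Ico (h : IsDisjunctiveExtension U φ V) (s : α) : φ s ∈ Set.Ico (0 : ℝ) 1 :=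
  Set.Ioo_subset_Ico_self (h.apply_mem_Ioo s)

lemma apply_mem_Icc (h : IsDisjunctiveExtension U φ V) (s : α) : φ s ∈ Set.Icc (0 : ℝ) 1 :=
  Set.Ioo_subset_Icc_self (h.apply_mem_Ioo s)

lemma eq_zero_or_eq_one_or_exists (h : IsDisjunctiveExtension U φ V) (hx : x ∈ Set.Icc (0 : ℝ) 1) :
    x = 0 ∨ x = 1 ∨ ∃ s, φ s = x := by
  rcases Set.eq_endpoints_or_mem_Ioo_of_mem_Icc hx with rfl | rfl | hx
  · exact .inl rfl
  · exact .inr (.inl rfl)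
  · exact .inr (.inr (h.range_eq.ge hx))

lemma one_left (h : IsDisjunctiveExtension U φ V) (hx : x ∈ Set.Icc (0 : ℝ) 1) : U 1 x = 1 :=
  h.top 1 (Set.right_mem_Icc.2 zero_le_one) x hx (max_eq_left hx.2)

lemma one_right (h : IsDisjunctiveExtension U φ V) (hx : x ∈ Set.Icc (0 : ℝ) 1) : U x 1 = 1 :=
  h.top x hx 1 (Set.right_mem_Icc.2 zero_le_one) (max_eq_right hx.2)

lemma zero_left (h : IsDisjunctiveExtension U φ V) (hx : x ∈ Set.Ico (0 : ℝ) 1) : U 0 x = 0 :=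
  h.bot 0 (Set.left_mem_Icc.2 zero_le_one) x (Set.Ico_subset_Icc_self hx) (min_eq_left hx.1)
    (max_lt one_pos hx.2)

lemma zero_right (h : IsDisjunctiveExtension U φ V) (hx : x ∈ Set.Ico (0 : ℝ) 1) : U x 0 = 0 :=
  h.bot x (Set.Ico_subset_Icc_self hx) 0 (Set.left_mem_Icc.2 zero_le_one) (min_eq_right hx.1)
    (max_lt hx.2 one_pos)

lemma op_mem_Icc (h : IsDisjunctiveExtension U φ V) (hx : x ∈ Set.Icc (0 : ℝ) 1)
    (hy : y ∈ Set.Icc (0 : ℝ) 1) : U x y ∈ Set.Icc (0 : ℝ) 1 := by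
  rcases h.eq_zero_or_eq_one_or_exists hx with rfl | rfl | ⟨s, rfl⟩ <;>
  rcases h.eq_zero_or_eq_one_or_exists hy with rfl | rfl | ⟨t, rfl⟩ <;>
  simp only [h.one_left, h.one_right, h.zero_left, h.zero_right, h.map_op, h.apply_mem_Ico,
    h.apply_mem_Icc, Set.left_mem_Icc, Set.right_mem_Icc, Set.left_mem_Ico, zero_le_one,
    zero_lt_one]

lemma comm (h : IsDisjunctiveExtension U φ V) (hV : ∀ s t, V s t = V t s)
    (hx : x ∈ Set.Icc (0 : ℝ) 1) (hy : y ∈ Set.Icc (0 : ℝ) 1) : U x y = U y x := by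
  rcases h.eq_zero_or_eq_one_or_exists hx with rfl | rfl | ⟨s, rfl⟩ <;>
  rcases h.eq_zero_or_eq_one_or_exists hy with rfl | rfl | ⟨t, rfl⟩ <;>
  simp only [h.one_left, h.one_right, h.zero_left, h.zero_right, h.map_op, hV, h.apply_mem_Ico,
    h.apply_mem_Icc, Set.left_mem_Icc, Set.right_mem_Icc, Set.left_mem_Ico, zero_le_one,
    zero_lt_one]

lemma assoc (h : IsDisjunctiveExtension U φ V) (hV : ∀ s t r, V (V s t) r = V s (V t r))
    (hx : x ∈ Set.Icc (0 : ℝ) 1) (hy : y ∈ Set.Icc (0 : ℝ) 1) (hz : z ∈ Set.Icc (0 : ℝ) 1) :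
    U (U x y) z = U x (U y z) := by
  rcases h.eq_zero_or_eq_one_or_exists hx with rfl | rfl | ⟨s, rfl⟩ <;>
  rcases h.eq_zero_or_eq_one_or_exists hy with rfl | rfl | ⟨t, rfl⟩ <;>
  rcases h.eq_zero_or_eq_one_or_exists hz with rfl | rfl | ⟨r, rfl⟩ <;>
  simp only [h.one_left, h.one_right, h.zero_left, h.zero_right, h.map_op, hV, h.apply_mem_Ico,
    h.apply_mem_Icc, Set.left_mem_Icc, Set.right_mem_Icc, Set.left_mem_Ico, zero_le_one,
    zero_lt_one]

lemma right_neutral (h : IsDisjunctiveExtension U φ V) {e : α} (hV : ∀ s, V s e = s)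
    (hx : x ∈ Set.Icc (0 : ℝ) 1) : U x (φ e) = x := by
  rcases h.eq_zero_or_eq_one_or_exists hx with rfl | rfl | ⟨s, rfl⟩
  · exact h.zero_left (h.apply_mem_Ico e)
  · exact h.one_left (h.apply_mem_Icc e)
  · rw [h.map_op, hV]

lemma mono_right [LinearOrder α] (h : IsDisjunctiveExtension U φ V) (hφ : StrictAnti φ)
    (hV : ∀ s, Monotone (V s)) (hx : x ∈ Set.Icc (0 : ℝ) 1) (hy : y ∈ Set.Icc (0 : ℝ) 1)
    (hz : z ∈ Set.Icc (0 : ℝ) 1) (hyz : y ≤ z) : U x y ≤ U x z := by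
  rcases hz.2.eq_or_lt with rfl | hz1
  · rw [h.one_right hx]
    exact (h.op_mem_Icc hx hy).2
  have hy1 : y < 1 := hyz.trans_lt hz1
  rcases h.eq_zero_or_eq_one_or_exists hx with rfl | rfl | ⟨s, rfl⟩
  · rw [h.zero_left ⟨hy.1, hy1⟩, h.zero_left ⟨hz.1, hz1⟩]
  · rw [h.one_left hy, h.one_left hz]
  rcases hy.1.eq_or_lt with rfl | hy0
  · rw [h.zero_right (h.apply_mem_Ico s)]
    exact (h.op_mem_Icc hx hz).1
  obtain ⟨t, rfl⟩ := h.range_eq.ge ⟨hy0, hy1⟩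
  obtain ⟨r, rfl⟩ := h.range_eq.ge ⟨hy0.trans_le hyz, hz1⟩
  rw [h.map_op, h.map_op]
  exact hφ.antitone (hV s (hφ.le_iff_ge.1 hyz))

theorem isUninorm [LinearOrder α] (h : IsDisjunctiveExtension U φ V) (hφ : StrictAnti φ) {e : α}
    (hcomm : ∀ s t, V s t = V t s) (hassoc : ∀ s t r, V (V s t) r = V s (V t r))
    (hmono : ∀ s, Monotone (V s)) (he : ∀ s, V s e = s) : IsUninorm U (φ e) := by
  refine ⟨h.apply_mem_Icc e, fun x hx y hy => h.op_mem_Icc hx hy,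
    fun x hx y hy => h.comm hcomm hx hy, fun x hx y hy z hz => h.assoc hassoc hx hy hz,
    fun x hx y hy z hz hyz => h.mono_right hφ hmono hx hy hz hyz, fun x hx y hy z hz hxy => ?_,
    fun x hx => h.right_neutral he hx⟩
  rw [h.comm hcomm hx hz, h.comm hcomm hy hz]
  exact h.mono_right hφ hmono hz hx hy hxy

end IsDisjunctiveExtension

section FloorAdd

variable {k : Type*} [Ring k] [LinearOrder k] [FloorRing k]

/-- The operation that `U₁` induces on parameters, the point `2 ^ (-2 ^ s)` having parameter `s`:
it adds integer parts and takes the maximum of fractional parts. -/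
def floorAdd (s t : k) : k := max (s + ⌊t⌋) (t + ⌊s⌋)

lemma floorAdd_comm (s t : k) : floorAdd s t = floorAdd t s := max_comm _ _

variable [IsStrictOrderedRing k]

lemma monotone_floorAdd (s : k) : Monotone (floorAdd s) := fun _ _ h =>
  max_le_max (add_le_add_right (Int.cast_le.2 (Int.floor_mono h)) s) (add_le_add_left h _)

lemma floorAdd_intCast_left (n : ℤ) (t : k) : floorAdd (n : k) t = t + n := by
  rw [floorAdd, Int.floor_intCast, add_comm (n : k)]
  exact max_eq_right (add_le_add_left (Int.floor_le t) _)

lemma floorAdd_zero_right (s : k) : floorAdd s 0 = s := by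
  simpa [floorAdd_comm] using floorAdd_intCast_left 0 s

lemma floorAdd_eq_add_max_fract (s t : k) :
    floorAdd s t = ((⌊s⌋ + ⌊t⌋ : ℤ) : k) + max (Int.fract s) (Int.fract t) := by
  rw [floorAdd, ← max_add_add_left]
  simp only [Int.fract, Int.cast_add]
  congr 1 <;> abel

lemma floor_floorAdd (s t : k) : ⌊floorAdd s t⌋ = ⌊s⌋ + ⌊t⌋ := by
  have hfloor : ⌊max (Int.fract s) (Int.fract t)⌋ = 0 := Int.floor_eq_zero_iff.2
    ⟨le_max_of_le_left (Int.fract_nonneg s), max_lt (Int.fract_lt_one s) (Int.fract_lt_one t)⟩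
  rw [floorAdd_eq_add_max_fract, Int.floor_intCast_add, hfloor, add_zero]

lemma fract_floorAdd (s t : k) :
    Int.fract (floorAdd s t) = max (Int.fract s) (Int.fract t) := by
  rw [← Int.self_sub_floor, floor_floorAdd, floorAdd_eq_add_max_fract, add_sub_cancel_left]

lemma floorAdd_assoc (s t r : k) : floorAdd (floorAdd s t) r = floorAdd s (floorAdd t r) := by
  rw [floorAdd_eq_add_max_fract (floorAdd s t) r, floorAdd_eq_add_max_fract s (floorAdd t r),
    floor_floorAdd, floor_floorAdd, fract_floorAdd, fract_floorAdd, max_assoc, add_assoc]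

end FloorAdd

/-- The extension of `uPt` to real exponents, an order-reversing parametrisation of `(0,1)`. -/
noncomputable def uCurve (s : ℝ) : ℝ := 2 ^ (-(2 : ℝ) ^ s)

lemma uCurve_intCast (n : ℤ) : uCurve n = uPt n := by
  rw [uCurve, uPt, Real.rpow_intCast]

lemma uCurve_zero : uCurve 0 = 1 / 2 := by
  simp [uCurve, Real.rpow_neg_one]

lemma strictAnti_uCurve : StrictAnti uCurve := fun _ _ h =>
  Real.rpow_lt_rpow_of_exponent_lt one_lt_two
    (neg_lt_neg (Real.rpow_lt_rpow_of_exponent_lt one_lt_two h))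

lemma range_uCurve : Set.range uCurve = Set.Ioo 0 1 := by
  refine Set.Subset.antisymm (Set.range_subset_iff.2 fun s => ?_) fun x hx => ?_
  · exact ⟨Real.rpow_pos_of_pos two_pos _, Real.rpow_lt_one_of_one_lt_of_neg one_lt_two
      (neg_lt_zero.2 (Real.rpow_pos_of_pos two_pos s))⟩
  · have hlog : 0 < -Real.logb 2 x := neg_pos.2 (Real.logb_neg one_lt_two hx.1 hx.2)
    refine ⟨Real.logb 2 (-Real.logb 2 x), ?_⟩
    rw [uCurve, Real.rpow_logb two_pos one_lt_two.ne' hlog, neg_neg,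
      Real.rpow_logb two_pos one_lt_two.ne' hx.1]

lemma uCurve_rpow_two_zpow (s : ℝ) (m : ℤ) : uCurve s ^ ((2 : ℝ) ^ m) = uCurve (s + m) := by
  rw [uCurve, uCurve, ← Real.rpow_mul zero_le_two, Real.rpow_add two_pos, Real.rpow_intCast,
    neg_mul]

lemma uCurve_mem_Ioc_uPt_iff {s : ℝ} {n : ℤ} :
    uCurve s ∈ Set.Ioc (uPt (n + 1)) (uPt n) ↔ ⌊s⌋ = n := by
  rw [← uCurve_intCast, ← uCurve_intCast, Set.mem_Ioc, strictAnti_uCurve.lt_iff_gt,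
    strictAnti_uCurve.le_iff_ge, Int.floor_eq_iff, Int.cast_add, Int.cast_one, and_comm]

lemma existsUnique_mem_Ioc_uPt {x : ℝ} (hx : x ∈ Set.Ioo (0 : ℝ) 1) :
    ∃! n : ℤ, x ∈ Set.Ioc (uPt (n + 1)) (uPt n) := by
  obtain ⟨s, rfl⟩ := range_uCurve.ge hx
  simp only [uCurve_mem_Ioc_uPt_iff, existsUnique_eq']

theorem stmt17 (U₁ : ℝ → ℝ → ℝ)
    (htop : ∀ x ∈ Set.Icc (0:ℝ) 1, ∀ y ∈ Set.Icc (0:ℝ) 1, max x y = 1 → U₁ x y = 1)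
    (hbot : ∀ x ∈ Set.Icc (0:ℝ) 1, ∀ y ∈ Set.Icc (0:ℝ) 1,
      min x y = 0 → max x y < 1 → U₁ x y = 0)
    (hmid : ∀ n m : ℤ, ∀ x ∈ Set.Ioc (uPt (n + 1)) (uPt n), ∀ y ∈ Set.Ioc (uPt (m + 1)) (uPt m),
      U₁ x y = min (x ^ ((2 : ℝ) ^ m)) (y ^ ((2 : ℝ) ^ n))) :
    (∀ x ∈ Set.Ioo (0:ℝ) 1, ∃! n : ℤ, x ∈ Set.Ioc (uPt (n + 1)) (uPt n)) ∧
    IsUninorm U₁ (1/2) ∧ U₁ 1 0 = 1 ∧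
    (∀ n : ℤ, ∀ y ∈ Set.Ioo (0:ℝ) 1, U₁ (uPt n) y = y ^ ((2 : ℝ) ^ n)) := by
  have hU : IsDisjunctiveExtension U₁ uCurve floorAdd :=
    { top := htop
      bot := hbot
      range_eq := range_uCurve
      map_op := fun s t => by
        rw [hmid ⌊s⌋ ⌊t⌋ _ (uCurve_mem_Ioc_uPt_iff.2 rfl) _ (uCurve_mem_Ioc_uPt_iff.2 rfl),
          uCurve_rpow_two_zpow, uCurve_rpow_two_zpow, floorAdd,
          strictAnti_uCurve.antitone.map_max] }
  refine ⟨fun x hx => existsUnique_mem_Ioc_uPt hx, ?_,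
    hU.one_left (Set.left_mem_Icc.2 zero_le_one), fun n y hy => ?_⟩
  · rw [← uCurve_zero]
    exact hU.isUninorm strictAnti_uCurve floorAdd_comm floorAdd_assoc monotone_floorAdd
      floorAdd_zero_right
  · obtain ⟨t, rfl⟩ := range_uCurve.ge hy
    rw [← uCurve_intCast, hU.map_op, floorAdd_intCast_left, uCurve_rpow_two_zpow]
end
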